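/- arXiv:1301.5482 — 11 statements merged into one kernel-verified Lean document; each statement's English description precedes it below -/
import Mathlib

section
/- Let C1 ⊆ F_{q^m}^n be a linear code and C2 ⊊ C1 a subcode. Then the i-th RDIP K_{R,i}(C1,C2) satisfies K_{R,0}(C1,C2) = 0, K_{R,n}(C1,C2) = dim C1 − dim C2, K_{R,i}(C1,C2) is nondecreasing in i, and 0 ≤ K_{R,i+1}(C1,C2) − K_{R,i}(C1,C2) ≤ 1 for all 0 ≤ i ≤ n−1. -/
open scoped BigOperators

noncomputable section

variable (q : ℕ) (Fq : Type*) {Fqm : Type*} [Field Fq] [Field Fqm] [Algebra Fq Fqm]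

/-- `V = V^q`: the image of `V` under the coordinatewise `q`-th power map equals `V`
(membership in the family `Γ(F_{q^m}^n)`). -/
def IsGalClosed {n : ℕ} (V : Submodule Fqm (Fin n → Fqm)) : Prop :=
  (fun v : Fin n → Fqm => fun i => v i ^ q) '' (V : Set (Fin n → Fqm)) =
    (V : Set (Fin n → Fqm))

/-- The `i`-th relative dimension/intersection profile (RDIP) of `C1` and `C2`. -/
noncomputable def RDIP {n : ℕ} (C1 C2 : Submodule Fqm (Fin n → Fqm)) (i : ℕ) : ℕ :=
  sSup {d : ℕ | ∃ V : Submodule Fqm (Fin n → Fqm), IsGalClosed q V ∧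
    Module.finrank Fqm ↥V = i ∧
    d = Module.finrank Fqm ↥(C1 ⊓ V) - Module.finrank Fqm ↥(C2 ⊓ V)}

/-- The `i`-th relative generalized rank weight (RGRW) of `C1` and `C2`. -/
noncomputable def RGRW {n : ℕ} (C1 C2 : Submodule Fqm (Fin n → Fqm)) (i : ℕ) : ℕ :=
  sInf {d : ℕ | ∃ V : Submodule Fqm (Fin n → Fqm), IsGalClosed q V ∧
    d = Module.finrank Fqm ↥V ∧
    i ≤ Module.finrank Fqm ↥(C1 ⊓ V) - Module.finrank Fqm ↥(C2 ⊓ V)}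

/-- The rank weight `d_R(x,0)` of a vector: the `F_q`-dimension of the `F_q`-span of
its coordinates. -/
noncomputable def rankWeight {ι : Type*} (x : ι → Fqm) : ℕ :=
  Module.finrank Fq ↥(Submodule.span Fq (Set.range x))

/-- The minimum rank distance of a (nonzero) linear code. -/
noncomputable def minRankDist {ι : Type*} (C : Submodule Fqm (ι → Fqm)) : ℕ :=
  sInf {d : ℕ | ∃ x, x ∈ C ∧ x ≠ 0 ∧ d = rankWeight Fq x}

/-- The dual code with respect to the standard bilinear form `⟨x,y⟩ = ∑ i, x i * y i`. -/
def dualCode {n : ℕ} (V : Submodule Fqm (Fin n → Fqm)) : Submodule Fqm (Fin n → Fqm) where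
  carrier := {x | ∀ v ∈ V, ∑ i, x i * v i = 0}
  add_mem' := by
    intro a b ha hb v hv
    have h1 := ha v hv
    have h2 := hb v hv
    simp only [Set.mem_setOf_eq] at *
    simp only [Pi.add_apply, add_mul]
    rw [Finset.sum_add_distrib, h1, h2, add_zero]
  zero_mem' := by
    intro v hv
    simp
  smul_mem' := by
    intro c x hx v hv
    have h := hx v hv
    simp only [Set.mem_setOf_eq] at *
    simp only [Pi.smul_apply, smul_eq_mul, mul_assoc]
    rw [← Finset.mul_sum, h, mul_zero]


theorem aux_closed [Fintype Fq] [Fintype Fqm] (hq : Fintype.card Fq = q) {n : ℕ}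
    (V : Submodule Fqm (Fin n → Fqm))
    (h : ∀ v ∈ V, (fun i => v i ^ q) ∈ V) : IsGalClosed q V := by
  have hinj : Function.Injective (fun v : Fin n → Fqm => fun i => v i ^ q) := by
    intro v w hvw
    funext i
    have h1 : v i ^ q = w i ^ q := congrFun hvw i
    apply (FiniteField.frobeniusAlgHom Fq Fqm).toRingHom.injective
    simpa [hq] using h1
  unfold IsGalClosed
  apply Set.eq_of_subset_of_ncard_le
  · rintro _ ⟨v, hv, rfl⟩
    exact h v hv
  · rw [Set.ncard_image_of_injective _ hinj]
  · exact Set.toFinite _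

theorem aux_mem {n : ℕ} {V : Submodule Fqm (Fin n → Fqm)} (h : IsGalClosed q V)
    {v : Fin n → Fqm} (hv : v ∈ V) : (fun i => v i ^ q) ∈ V := by
  have : (fun i => v i ^ q) ∈ (V : Set (Fin n → Fqm)) := by
    rw [← h]
    exact ⟨v, hv, rfl⟩
  exact this

theorem aux_up [Fintype Fq] [Fintype Fqm] (hq : Fintype.card Fq = q) {n : ℕ}
    (V : Submodule Fqm (Fin n → Fqm)) (h : IsGalClosed q V)
    (hn : Module.finrank Fqm V < n) :
    ∃ W : Submodule Fqm (Fin n → Fqm), IsGalClosed q W ∧ V ≤ W ∧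
      Module.finrank Fqm W = Module.finrank Fqm V + 1 := by
  have hj : ∃ j : Fin n, (Pi.single j 1 : Fin n → Fqm) ∉ V := by
    by_contra! hc
    have htop : V = ⊤ := by
      rw [eq_top_iff]
      intro v _
      rw [pi_eq_sum_univ' v]
      refine V.sum_mem fun i _ => V.smul_mem _ ?_
      convert hc i using 1
    rw [htop] at hn
    simp at hn
  obtain ⟨j, hj⟩ := hj
  refine ⟨V ⊔ Submodule.span Fqm {(Pi.single j 1 : Fin n → Fqm)}, ?_, le_sup_left, ?_⟩
  · apply aux_closed q Fq hq
    intro v hv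
    rw [Submodule.mem_sup] at hv ⊢
    obtain ⟨y, hy, z, hz, rfl⟩ := hv
    obtain ⟨c, rfl⟩ := Submodule.mem_span_singleton.1 hz
    refine ⟨_, aux_mem q h hy, c ^ q • Pi.single j 1,
      Submodule.smul_mem _ _ (Submodule.mem_span_singleton_self _), ?_⟩
    funext i
    have hadd : ∀ a b : Fqm, (a + b) ^ q = a ^ q + b ^ q := by
      intro a b
      have := map_add (FiniteField.frobeniusAlgHom Fq Fqm) a b
      simpa [hq] using this
    have h0 : q ≠ 0 := by
      rw [← hq]
      exact Fintype.card_ne_zero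
    by_cases hi : i = j
    · subst hi
      simp [hadd]
    · simp [hi, h0]
  · have h1 := Submodule.finrank_sup_add_finrank_inf_eq V
      (Submodule.span Fqm {(Pi.single j 1 : Fin n → Fqm)})
    have h2 : Module.finrank Fqm (Submodule.span Fqm {(Pi.single j 1 : Fin n → Fqm)}) = 1 :=
      finrank_span_singleton (by simp)
    have h3 : V ⊓ Submodule.span Fqm {(Pi.single j 1 : Fin n → Fqm)} = ⊥ := by
      rw [eq_bot_iff]
      rintro x ⟨hx, hx2⟩
      obtain ⟨c, rfl⟩ := Submodule.mem_span_singleton.1 hx2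
      by_cases hc : c = 0
      · simp [hc]
      · exact absurd ((V.smul_mem_iff hc).1 hx) hj
    rw [h3, h2] at h1
    simpa using h1

theorem aux_down [Fintype Fq] [Fintype Fqm] (hq : Fintype.card Fq = q) {n : ℕ}
    (V : Submodule Fqm (Fin n → Fqm)) (h : IsGalClosed q V)
    (hn : 0 < Module.finrank Fqm V) :
    ∃ W : Submodule Fqm (Fin n → Fqm), IsGalClosed q W ∧ W ≤ V ∧
      Module.finrank Fqm V = Module.finrank Fqm W + 1 := by
  have hj : ∃ j : Fin n, ∃ v ∈ V, v j ≠ 0 := by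
    by_contra! hc
    have hb : V = ⊥ := by
      rw [eq_bot_iff]
      intro v hv
      rw [Submodule.mem_bot]
      funext j
      exact hc j v hv
    rw [hb] at hn
    simp at hn
  obtain ⟨j, v, hv, hvj⟩ := hj
  have h0 : q ≠ 0 := by
    rw [← hq]
    exact Fintype.card_ne_zero
  let W : Submodule Fqm (Fin n → Fqm) :=
    V ⊓ LinearMap.ker (LinearMap.proj j : (Fin n → Fqm) →ₗ[Fqm] Fqm)
  refine ⟨W, ?_, inf_le_left, ?_⟩
  · apply aux_closed q Fq hq
    rintro w ⟨hw, hw2⟩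
    refine ⟨aux_mem q h hw, ?_⟩
    have hw3 : w j = 0 := hw2
    simp [hw3, h0]
  · have h1 := Submodule.finrank_sup_add_finrank_inf_eq W (Submodule.span Fqm {v})
    have h2 : Module.finrank Fqm (Submodule.span Fqm {v}) = 1 :=
      finrank_span_singleton (by rintro rfl; simp at hvj)
    have h3 : W ⊓ Submodule.span Fqm {v} = ⊥ := by
      rw [eq_bot_iff]
      rintro x ⟨⟨_, hx⟩, hx2⟩
      obtain ⟨c, rfl⟩ := Submodule.mem_span_singleton.1 hx2
      have hx3 : c * v j = 0 := hx
      have hc : c = 0 := by simpa [hvj] using hx3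
      simp [hc]
    have h4 : W ⊔ Submodule.span Fqm {v} = V := by
      apply le_antisymm
      · refine sup_le inf_le_left ?_
        rw [Submodule.span_singleton_le_iff_mem]
        exact hv
      · intro x hx
        rw [Submodule.mem_sup]
        refine ⟨x - (x j / v j) • v, ⟨V.sub_mem hx (V.smul_mem _ hv), ?_⟩, (x j / v j) • v,
          Submodule.smul_mem _ _ (Submodule.mem_span_singleton_self _), by simp⟩
        simp [hvj]
    rw [h3, h2, h4] at h1
    simpa using h1

theorem aux_mono {n : ℕ} {C1 C2 : Submodule Fqm (Fin n → Fqm)} (h : C2 ≤ C1)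
    {W V : Submodule Fqm (Fin n → Fqm)} (hWV : W ≤ V) :
    Module.finrank Fqm ↥(C1 ⊓ W) - Module.finrank Fqm ↥(C2 ⊓ W) ≤
      Module.finrank Fqm ↥(C1 ⊓ V) - Module.finrank Fqm ↥(C2 ⊓ V) := by
  have h1 := Submodule.finrank_sup_add_finrank_inf_eq (C1 ⊓ W) (C2 ⊓ V)
  have h2 : (C1 ⊓ W) ⊓ (C2 ⊓ V) = C2 ⊓ W := by
    apply le_antisymm
    · exact le_inf (inf_le_right.trans inf_le_left) (inf_le_left.trans inf_le_right)
    · exact le_inf (inf_le_inf_right _ h) (inf_le_inf_left _ hWV)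
  have h3 : Module.finrank Fqm ↥((C1 ⊓ W) ⊔ (C2 ⊓ V)) ≤ Module.finrank Fqm ↥(C1 ⊓ V) :=
    Submodule.finrank_mono (sup_le (inf_le_inf_left _ hWV) (inf_le_inf_right _ h))
  rw [h2] at h1
  omega

theorem aux_step {n : ℕ} {C1 C2 : Submodule Fqm (Fin n → Fqm)}
    {W V : Submodule Fqm (Fin n → Fqm)} (hWV : W ≤ V)
    (hd : Module.finrank Fqm V = Module.finrank Fqm W + 1) :
    Module.finrank Fqm ↥(C1 ⊓ V) - Module.finrank Fqm ↥(C2 ⊓ V) ≤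
      Module.finrank Fqm ↥(C1 ⊓ W) - Module.finrank Fqm ↥(C2 ⊓ W) + 1 := by
  have h1 := Submodule.finrank_sup_add_finrank_inf_eq (C1 ⊓ V) W
  have h2 : (C1 ⊓ V) ⊓ W = C1 ⊓ W := by
    rw [inf_assoc, inf_eq_right.2 hWV]
  have h3 : Module.finrank Fqm ↥((C1 ⊓ V) ⊔ W) ≤ Module.finrank Fqm V :=
    Submodule.finrank_mono (sup_le inf_le_right hWV)
  have h4 : Module.finrank Fqm ↥(C2 ⊓ W) ≤ Module.finrank Fqm ↥(C2 ⊓ V) :=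
    Submodule.finrank_mono (inf_le_inf_left _ hWV)
  rw [h2] at h1
  omega

theorem aux_le {n : ℕ} (C1 C2 : Submodule Fqm (Fin n → Fqm))
    (V : Submodule Fqm (Fin n → Fqm)) (hV : IsGalClosed q V) :
    Module.finrank Fqm ↥(C1 ⊓ V) - Module.finrank Fqm ↥(C2 ⊓ V) ≤
      RDIP q C1 C2 (Module.finrank Fqm V) := by
  apply le_csSup
  · refine ⟨Module.finrank Fqm C1, ?_⟩
    rintro d ⟨V, _, _, rfl⟩
    exact (Nat.sub_le _ _).trans (Submodule.finrank_mono inf_le_left)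
  · exact ⟨V, hV, rfl, rfl⟩

/-- Monotonicity of the RDIP: `K_{R,0}(C1,C2) = 0`,
`K_{R,n}(C1,C2) = dim C1 - dim C2`, `K_{R,i}` is nondecreasing in `i` on `[0,n]`,
and consecutive increments are at most `1`. -/
theorem stmt1 (m n : ℕ) [Fintype Fq] [Fintype Fqm]
    (hq : Fintype.card Fq = q) (hm : Module.finrank Fq Fqm = m)
    (C1 C2 : Submodule Fqm (Fin n → Fqm)) (h12 : C2 < C1) :
    RDIP q C1 C2 0 = 0 ∧
    RDIP q C1 C2 n = Module.finrank Fqm ↥C1 - Module.finrank Fqm ↥C2 ∧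
    (∀ i j, i ≤ j → j ≤ n → RDIP q C1 C2 i ≤ RDIP q C1 C2 j) ∧
    (∀ i, i + 1 ≤ n → RDIP q C1 C2 (i + 1) ≤ RDIP q C1 C2 i + 1) := by
  refine ⟨?_, ?_, ?_, ?_⟩
  · apply Nat.le_zero.1
    apply csSup_le'
    rintro d ⟨V, _, hV, rfl⟩
    have : Module.finrank Fqm ↥(C1 ⊓ V) ≤ Module.finrank Fqm V :=
      Submodule.finrank_mono inf_le_right
    omega
  · apply le_antisymm
    · apply csSup_le'
      rintro d ⟨V, _, hV, rfl⟩
      have := aux_mono h12.le (le_top : V ≤ ⊤)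
      rw [inf_top_eq, inf_top_eq] at this
      exact this
    · have := aux_le q C1 C2 ⊤ (aux_closed q Fq hq ⊤ (fun _ _ => Submodule.mem_top))
      rw [inf_top_eq, inf_top_eq, finrank_top, Module.finrank_fin_fun] at this
      exact this
  · intro i j hij
    induction j, hij using Nat.le_induction with
    | base => intro _; exact le_rfl
    | succ j hij ih =>
      intro hj
      refine (ih (by omega)).trans ?_
      apply csSup_le'
      rintro d ⟨V, hV, hd, rfl⟩
      obtain ⟨W, hW, hVW, hWd⟩ := aux_up q Fq hq V hV (by omega)
      refine (aux_mono h12.le hVW).trans ?_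
      rw [← hd, ← hWd]
      exact aux_le q C1 C2 W hW
  · intro i hi
    apply csSup_le'
    rintro d ⟨V, hV, hd, rfl⟩
    obtain ⟨W, hW, hWV, hWd⟩ := aux_down q Fq hq V hV (by omega)
    refine (aux_step hWV hWd).trans ?_
    have : i = Module.finrank Fqm W := by omega
    rw [this]
    exact Nat.add_le_add_right (aux_le q C1 C2 W hW) 1

end
end

section
/- Let C1 ⊆ F_{q^m}^n be a linear code and C2 ⊊ C1 a subcode. Then the i-th RGRW M_{R,i}(C1,C2) is strictly increasing in i on 0 ≤ i ≤ dim C1 − dim C2, M_{R,0}(C1,C2) = 0, and for every 0 ≤ i ≤ dim C1 − dim C2 one has M_{R,i}(C1,C2) = min{ j : K_{R,j}(C1,C2) = i } = min{ dim V : V ∈ Γ(F_{q^m}^n), dim(C1 ∩ V) − dim(C2 ∩ V) = i }. -/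
open scoped BigOperators

noncomputable section

variable (q : ℕ) (Fq : Type*) {Fqm : Type*} [Field Fq] [Field Fqm] [Algebra Fq Fqm]

theorem exists_codim_one {K : Type*} [Field K] {n r : ℕ} (hr : r ≠ 0)
    (V : Submodule K (Fin n → K)) (hV : IsGalClosed r V) (hpos : 0 < Module.finrank K V) :
    ∃ W : Submodule K (Fin n → K), IsGalClosed r W ∧ W ≤ V ∧
      Module.finrank K W + 1 = Module.finrank K V := by
  have hne : ∃ v ∈ V, v ≠ 0 := by
    rw [← Submodule.ne_bot_iff]
    rintro rfl
    simp at hpos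
  obtain ⟨v, hv, hv0⟩ := hne
  obtain ⟨i, hi⟩ := Function.ne_iff.mp hv0
  let φ : V →ₗ[K] K := (LinearMap.proj i).comp V.subtype
  have hφ : Function.Surjective φ := by
    apply LinearMap.surjective
    intro h
    apply hi
    exact congrArg (fun g : V →ₗ[K] K => g ⟨v, hv⟩) h
  refine ⟨V ⊓ LinearMap.ker (LinearMap.proj i : (Fin n → K) →ₗ[K] K), ?_, inf_le_left, ?_⟩
  · unfold IsGalClosed at hV ⊢
    ext x
    constructor
    · rintro ⟨y, ⟨hy, hy0⟩, rfl⟩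
      refine ⟨hV ▸ ⟨y, hy, rfl⟩, ?_⟩
      simp only [SetLike.mem_coe, LinearMap.mem_ker, LinearMap.proj_apply] at hy0 ⊢
      simp [hy0, hr]
    · rintro ⟨hx, hx0⟩
      rw [← hV] at hx
      obtain ⟨y, hy, rfl⟩ := hx
      refine ⟨y, ⟨hy, ?_⟩, rfl⟩
      simp only [SetLike.mem_coe, LinearMap.mem_ker, LinearMap.proj_apply] at hx0 ⊢
      exact (pow_eq_zero_iff hr).mp hx0
  · have h1 := LinearMap.finrank_range_add_finrank_ker φ
    rw [LinearMap.range_eq_top.mpr hφ, finrank_top, Module.finrank_self] at h1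
    have h2 : (LinearMap.ker φ).map V.subtype =
        V ⊓ LinearMap.ker (LinearMap.proj i : (Fin n → K) →ₗ[K] K) := by
      rw [LinearMap.ker_comp, Submodule.map_comap_subtype]
    rw [← h2, Submodule.finrank_map_subtype_eq]
    omega

theorem diff_step {K : Type*} [Field K] {n : ℕ} (C1 C2 V W : Submodule K (Fin n → K))
    (h12 : C2 ≤ C1) (hW : W ≤ V) (hd : Module.finrank K W + 1 = Module.finrank K V) :
    Module.finrank K ↥(C1 ⊓ V) - Module.finrank K ↥(C2 ⊓ V) ≤
      Module.finrank K ↥(C1 ⊓ W) - Module.finrank K ↥(C2 ⊓ W) + 1 := by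
  have h1 := Submodule.finrank_sup_add_finrank_inf_eq (C1 ⊓ V) W
  have h2 : C1 ⊓ V ⊓ W = C1 ⊓ W := by rw [inf_assoc, inf_eq_right.mpr hW]
  have h3 : Module.finrank K ↥(C1 ⊓ V ⊔ W) ≤ Module.finrank K V :=
    Submodule.finrank_mono (sup_le inf_le_right hW)
  have h4 : Module.finrank K ↥(C2 ⊓ W) ≤ Module.finrank K ↥(C2 ⊓ V) :=
    Submodule.finrank_mono (inf_le_inf_left _ hW)
  rw [h2] at h1
  omega

theorem RGRW_le {K : Type*} [Field K] {n r : ℕ} (C1 C2 V : Submodule K (Fin n → K))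
    (i : ℕ) (hV : IsGalClosed r V)
    (hi : i ≤ Module.finrank K ↥(C1 ⊓ V) - Module.finrank K ↥(C2 ⊓ V)) :
    RGRW r C1 C2 i ≤ Module.finrank K V :=
  Nat.sInf_le ⟨V, hV, rfl, hi⟩

theorem RGRW_attained {K : Type*} [Field K] {n r : ℕ} (C1 C2 : Submodule K (Fin n → K))
    (htop : IsGalClosed r (⊤ : Submodule K (Fin n → K)))
    (i : ℕ) (hi : i ≤ Module.finrank K C1 - Module.finrank K C2) :
    ∃ V : Submodule K (Fin n → K), IsGalClosed r V ∧ Module.finrank K V = RGRW r C1 C2 i ∧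
      i ≤ Module.finrank K ↥(C1 ⊓ V) - Module.finrank K ↥(C2 ⊓ V) := by
  have hne : {d : ℕ | ∃ V : Submodule K (Fin n → K), IsGalClosed r V ∧
    d = Module.finrank K ↥V ∧
    i ≤ Module.finrank K ↥(C1 ⊓ V) - Module.finrank K ↥(C2 ⊓ V)}.Nonempty :=
    ⟨_, ⊤, htop, rfl, by rw [inf_top_eq, inf_top_eq]; exact hi⟩
  obtain ⟨V, h1, h2, h3⟩ := Nat.sInf_mem hne
  exact ⟨V, h1, h2.symm, h3⟩

theorem diff_zero {K : Type*} [Field K] {n : ℕ} (C1 C2 V : Submodule K (Fin n → K))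
    (h : 0 < Module.finrank K ↥(C1 ⊓ V) - Module.finrank K ↥(C2 ⊓ V)) :
    0 < Module.finrank K V := by
  have : Module.finrank K ↥(C1 ⊓ V) ≤ Module.finrank K V :=
    Submodule.finrank_mono inf_le_right
  omega

/-- If a closed `V` has difference larger than `i`, then `RGRW i` is below `dim V`. -/
theorem RGRW_lt {K : Type*} [Field K] {n r : ℕ} (hr : r ≠ 0)
    (C1 C2 V : Submodule K (Fin n → K)) (h12 : C2 ≤ C1)
    (i : ℕ) (hV : IsGalClosed r V)
    (hi : i < Module.finrank K ↥(C1 ⊓ V) - Module.finrank K ↥(C2 ⊓ V)) :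
    RGRW r C1 C2 i < Module.finrank K V := by
  obtain ⟨W, hW, hWV, hd⟩ := exists_codim_one hr V hV (diff_zero C1 C2 V (by omega))
  have h1 := diff_step C1 C2 V W h12 hWV hd
  have h2 := RGRW_le C1 C2 W i hW (by omega)
  omega

/-- The RGRW `M_{R,i}(C1,C2)` is strictly increasing in `i` on
`0 ≤ i ≤ dim C1 - dim C2`, `M_{R,0}(C1,C2) = 0`, and for every such `i`,
`M_{R,i}(C1,C2) = min{ j : K_{R,j}(C1,C2) = i }
               = min{ dim V : V ∈ Γ, dim(C1 ∩ V) - dim(C2 ∩ V) = i }`. -/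
theorem stmt2 (m n : ℕ) [Fintype Fq] [Fintype Fqm]
    (hq : Fintype.card Fq = q) (hm : Module.finrank Fq Fqm = m)
    (C1 C2 : Submodule Fqm (Fin n → Fqm)) (h12 : C2 < C1) :
    (∀ i j, i < j → j ≤ Module.finrank Fqm ↥C1 - Module.finrank Fqm ↥C2 →
      RGRW q C1 C2 i < RGRW q C1 C2 j) ∧
    RGRW q C1 C2 0 = 0 ∧
    (∀ i, i ≤ Module.finrank Fqm ↥C1 - Module.finrank Fqm ↥C2 →
      RGRW q C1 C2 i = sInf {j : ℕ | RDIP q C1 C2 j = i} ∧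
      RGRW q C1 C2 i = sInf {d : ℕ | ∃ V : Submodule Fqm (Fin n → Fqm),
        IsGalClosed q V ∧ d = Module.finrank Fqm ↥V ∧
        Module.finrank Fqm ↥(C1 ⊓ V) - Module.finrank Fqm ↥(C2 ⊓ V) = i}) := by
  have hr : q ≠ 0 := by rw [← hq]; exact Fintype.card_ne_zero
  have htop : IsGalClosed q (⊤ : Submodule Fqm (Fin n → Fqm)) := by
    unfold IsGalClosed
    rw [Submodule.top_coe, Set.image_univ, Set.range_eq_univ]
    intro x
    refine ⟨fun i => (FiniteField.frobeniusAlgEquivOfAlgebraic Fq Fqm).symm (x i), ?_⟩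
    funext i
    have := (FiniteField.frobeniusAlgEquivOfAlgebraic Fq Fqm).apply_symm_apply (x i)
    rw [FiniteField.coe_frobeniusAlgEquivOfAlgebraic, hq] at this
    exact this
  have h0 : RGRW q C1 C2 0 = 0 := by
    have := RGRW_le (r := q) C1 C2 ⊥ 0 (by simp [IsGalClosed, hr]; rfl) (Nat.zero_le _)
    simpa using this
  refine ⟨?_, h0, ?_⟩
  · intro i j hij hj
    obtain ⟨V, hV, hd, hf⟩ := RGRW_attained C1 C2 htop j hj
    rw [← hd]
    exact RGRW_lt hr C1 C2 V h12.le i hV (by omega)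
  · intro i hi
    obtain ⟨V, hV, hd, hf⟩ := RGRW_attained C1 C2 htop i hi
    have key : ∀ V' : Submodule Fqm (Fin n → Fqm), IsGalClosed q V' →
        Module.finrank Fqm V' = RGRW q C1 C2 i →
        Module.finrank Fqm ↥(C1 ⊓ V') - Module.finrank Fqm ↥(C2 ⊓ V') ≤ i := by
      intro V' hV' hd'
      by_contra hlt
      have := RGRW_lt hr C1 C2 V' h12.le i hV' (by omega)
      omega
    have hfi := le_antisymm (key V hV hd) hf
    constructor
    · have hmem : RDIP q C1 C2 (RGRW q C1 C2 i) = i := by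
        apply IsGreatest.csSup_eq
        refine ⟨⟨V, hV, hd, hfi.symm⟩, ?_⟩
        rintro d ⟨V', hV', hd', rfl⟩
        exact key V' hV' hd'
      have hmem' : RGRW q C1 C2 i ∈ {j : ℕ | RDIP q C1 C2 j = i} := hmem
      refine le_antisymm ?_ (Nat.sInf_le hmem')
      refine le_csInf ⟨_, hmem'⟩ ?_
      intro j hj
      rcases Nat.eq_zero_or_pos i with rfl | hpos
      · omega
      have hj' : RDIP q C1 C2 j = i := hj
      unfold RDIP at hj'
      have hne : {d : ℕ | ∃ V : Submodule Fqm (Fin n → Fqm), IsGalClosed q V ∧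
          Module.finrank Fqm ↥V = j ∧
          d = Module.finrank Fqm ↥(C1 ⊓ V) - Module.finrank Fqm ↥(C2 ⊓ V)}.Nonempty := by
        by_contra h
        rw [Set.not_nonempty_iff_eq_empty.mp h] at hj'
        simp at hj'
        omega
      have hbd : BddAbove {d : ℕ | ∃ V : Submodule Fqm (Fin n → Fqm), IsGalClosed q V ∧
          Module.finrank Fqm ↥V = j ∧
          d = Module.finrank Fqm ↥(C1 ⊓ V) - Module.finrank Fqm ↥(C2 ⊓ V)} := by
        refine ⟨Module.finrank Fqm C1, ?_⟩
        rintro d ⟨V', -, -, rfl⟩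
        exact (Nat.sub_le _ _).trans (Submodule.finrank_mono inf_le_left)
      obtain ⟨V', hV', hd', hf'⟩ := Nat.sSup_mem hne hbd
      rw [← hd']
      exact RGRW_le C1 C2 V' i hV' (by omega)
    · apply le_antisymm
      · refine le_csInf ⟨_, V, hV, rfl, hfi⟩ ?_
        rintro d ⟨V', hV', rfl, hf'⟩
        exact RGRW_le C1 C2 V' i hV' hf'.ge
      · exact Nat.sInf_le ⟨V, hV, hd.symm, hfi⟩

end
end

section
/- Let C1 ⊆ F_{q^m}^n be a linear code and C2 ⊊ C1 a subcode. Then for every 1 ≤ i ≤ dim C1 − dim C2, the i-th RGRW is upper bounded by M_{R,i}(C1,C2) ≤ min{ n − dim C1, (m−1)(dim C1 − dim C2) } + i. -/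
open scoped BigOperators

noncomputable section

variable (q : ℕ) (Fq : Type*) {Fqm : Type*} [Field Fq] [Field Fqm] [Algebra Fq Fqm]

open Module in
lemma aux_step_s3 {F : Type*} [Field F] {n : ℕ} (C B V : Submodule F (Fin n → F)) (hBV : B ≤ V)
    (h : finrank F V ≤ finrank F B + 1) :
    finrank F ↥(C ⊓ V) ≤ finrank F ↥(C ⊓ B) + 1 := by
  have h1 := Submodule.finrank_sup_add_finrank_inf_eq (C ⊓ V) B
  have h2 : (C ⊓ V) ⊓ B = C ⊓ B := by
    rw [inf_assoc, inf_eq_right.mpr hBV]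
  have h3 : finrank F ↥((C ⊓ V) ⊔ B) ≤ finrank F V :=
    Submodule.finrank_mono (sup_le inf_le_right hBV)
  rw [h2] at h1
  omega

/-- A rational linearly independent finite set. -/
def AuxGood (q : ℕ) {F : Type*} [Field F] {n : ℕ} (T : Finset (Fin n → F)) : Prop :=
  (∀ v ∈ T, ∀ j, v j ^ q = v j) ∧ LinearIndepOn F id (T : Set (Fin n → F))

abbrev auxSp {F : Type*} [Field F] {n : ℕ} (T : Finset (Fin n → F)) :
    Submodule F (Fin n → F) := Submodule.span F (T : Set (Fin n → F))

open Module in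
lemma AuxGood.finrank {q : ℕ} {F : Type*} [Field F] {n : ℕ} {T : Finset (Fin n → F)}
    (h : AuxGood q T) : finrank F (auxSp T) = T.card :=
  finrank_span_finset_eq_card h.2

lemma AuxGood.mono {q : ℕ} {F : Type*} [Field F] {n : ℕ} {T T' : Finset (Fin n → F)}
    (h : AuxGood q T) (h' : T' ⊆ T) : AuxGood q T' :=
  ⟨fun v hv => h.1 v (h' hv), h.2.mono (by exact_mod_cast h')⟩

open Module in
lemma AuxGood.erase_step {q : ℕ} {F : Type*} [Field F] {n : ℕ} [DecidableEq (Fin n → F)]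
    {T : Finset (Fin n → F)}
    (h : AuxGood q T) {s : Fin n → F} (hs : s ∈ T) (C : Submodule F (Fin n → F)) :
    Module.finrank F ↥(C ⊓ auxSp T) ≤ Module.finrank F ↥(C ⊓ auxSp (T.erase s)) + 1 := by
  apply aux_step_s3
  · exact Submodule.span_mono (by exact_mod_cast Finset.erase_subset s T)
  · rw [h.finrank, (h.mono (Finset.erase_subset s T)).finrank, Finset.card_erase_add_one hs]

lemma AuxGood.exists_erase {q : ℕ} {F : Type*} [Field F] {n : ℕ} [DecidableEq (Fin n → F)]
    {T : Finset (Fin n → F)} (h : AuxGood q T) {x : Fin n → F} (hx : x ∈ auxSp T)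
    (hx0 : x ≠ 0) : ∃ s ∈ T, x ∉ auxSp (T.erase s) := by
  have key := linearIndepOn_iff.mp h.2
  have hx' := hx
  rw [auxSp, ← Set.image_id (T : Set (Fin n → F)),
    Finsupp.mem_span_image_iff_linearCombination] at hx'
  obtain ⟨l, hl, hlx⟩ := hx'
  have : l ≠ 0 := by
    rintro rfl
    simp at hlx
    exact hx0 hlx.symm
  obtain ⟨s, hs⟩ := Finsupp.ne_iff.mp this
  have hsl : s ∈ l.support := by simpa using hs
  refine ⟨s, by exact_mod_cast hl hsl, fun hm => ?_⟩
  rw [auxSp, ← Set.image_id ((T.erase s : Finset _) : Set (Fin n → F)),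
    Finsupp.mem_span_image_iff_linearCombination] at hm
  obtain ⟨l', hl', hlx'⟩ := hm
  have e := key (l - l') (Submodule.sub_mem _ hl
    (Finsupp.supported_mono (by exact_mod_cast Finset.erase_subset s T) hl'))
    (by rw [map_sub, hlx, hlx', sub_self])
  have e2 : l = l' := sub_eq_zero.mp e
  subst e2
  have := hl' hsl
  simp at this

open Module in
lemma aux_descend {q : ℕ} {F : Type*} [Field F] {n : ℕ} (C1 C2 : Submodule F (Fin n → F))
    (i : ℕ) (t : ℕ) : ∀ T : Finset (Fin n → F), AuxGood q T →
      finrank F ↥(C2 ⊓ auxSp T) + (i + t) ≤ finrank F ↥(C1 ⊓ auxSp T) →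
      ∃ T' : Finset (Fin n → F), AuxGood q T' ∧ T'.card + t ≤ T.card ∧
        finrank F ↥(C2 ⊓ auxSp T') + i ≤ finrank F ↥(C1 ⊓ auxSp T') := by
  classical
  induction t with
  | zero => intro T hT h; exact ⟨T, hT, by simp, by simpa using h⟩
  | succ t ih =>
    intro T hT h
    have hne : T.Nonempty := by
      rw [Finset.nonempty_iff_ne_empty]
      rintro rfl
      have : finrank F ↥(C1 ⊓ auxSp (∅ : Finset (Fin n → F))) = 0 := by simp [auxSp]
      omega
    obtain ⟨s, hs⟩ := hne
    have h1 := hT.erase_step hs C1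
    have h2 : finrank F ↥(C2 ⊓ auxSp (T.erase s)) ≤ finrank F ↥(C2 ⊓ auxSp T) :=
      Submodule.finrank_mono (inf_le_inf_left _
        (Submodule.span_mono (by exact_mod_cast Finset.erase_subset s T)))
    obtain ⟨T', a, b, c⟩ := ih (T.erase s) (hT.mono (Finset.erase_subset s T)) (by omega)
    have := Finset.card_erase_add_one hs
    exact ⟨T', a, by omega, c⟩

open Module in
lemma aux_kill {q : ℕ} {F : Type*} [Field F] {n : ℕ} (C1 C2 : Submodule F (Fin n → F))
    (k : ℕ) (t : ℕ) : ∀ T : Finset (Fin n → F), AuxGood q T →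
      finrank F ↥(C2 ⊓ auxSp T) = t →
      finrank F ↥(C2 ⊓ auxSp T) + k ≤ finrank F ↥(C1 ⊓ auxSp T) →
      ∃ T' : Finset (Fin n → F), AuxGood q T' ∧ T'.card + t ≤ T.card ∧
        finrank F ↥(C2 ⊓ auxSp T') + k ≤ finrank F ↥(C1 ⊓ auxSp T') := by
  classical
  induction t with
  | zero => intro T hT _ h; exact ⟨T, hT, by simp, by simpa using h⟩
  | succ t ih =>
    intro T hT h0 h
    have hne : C2 ⊓ auxSp T ≠ ⊥ := by
      intro hb
      rw [hb] at h0
      simp at h0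
    obtain ⟨x, hx, hx0⟩ := Submodule.exists_mem_ne_zero_of_ne_bot hne
    obtain ⟨s, hs, hxs⟩ := hT.exists_erase hx.2 hx0
    have h1 := hT.erase_step hs C1
    have h1' := hT.erase_step hs C2
    have h2 : finrank F ↥(C2 ⊓ auxSp (T.erase s)) < finrank F ↥(C2 ⊓ auxSp T) := by
      apply Submodule.finrank_lt_finrank_of_lt
      refine lt_of_le_of_ne (inf_le_inf_left _
        (Submodule.span_mono (by exact_mod_cast Finset.erase_subset s T))) fun e => ?_
      rw [← e] at hx
      exact hxs hx.2
    obtain ⟨T', a, b, c⟩ := ih (T.erase s) (hT.mono (Finset.erase_subset s T)) (by omega)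
      (by omega)
    have := Finset.card_erase_add_one hs
    exact ⟨T', a, by omega, c⟩

lemma aux_closed_s3 (q : ℕ) (Fq : Type*) {F : Type*} [Field Fq] [Field F] [Algebra Fq F]
    [Fintype Fq] [Fintype F] (hq : Fintype.card Fq = q) {n : ℕ} {S : Set (Fin n → F)}
    (hS : ∀ v ∈ S, ∀ j, v j ^ q = v j) : IsGalClosed q (Submodule.span F S) := by
  subst hq
  have hsub : (fun v : Fin n → F => fun i => v i ^ Fintype.card Fq) ''
      (Submodule.span F S : Set (Fin n → F)) ⊆ (Submodule.span F S : Set (Fin n → F)) := by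
    rintro _ ⟨v, hv, rfl⟩
    induction hv using Submodule.span_induction with
    | mem x hx =>
      have : (fun i => x i ^ Fintype.card Fq) = x := funext (hS x hx)
      simp only [this]
      exact Submodule.subset_span hx
    | zero =>
      have : (fun i : Fin n => (0 : Fin n → F) i ^ Fintype.card Fq) = 0 := by
        ext i; simp [Fintype.card_ne_zero]
      simp only [this]
      exact Submodule.zero_mem _
    | add x y _ _ hx hy =>
      have : (fun i => (x + y) i ^ Fintype.card Fq) =
          (fun i => x i ^ Fintype.card Fq) + (fun i => y i ^ Fintype.card Fq) := by
        ext i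
        exact map_add (FiniteField.frobeniusAlgHom Fq F) (x i) (y i)
      simp only [this]
      exact Submodule.add_mem _ hx hy
    | smul a x _ hx =>
      have : (fun i => (a • x) i ^ Fintype.card Fq) =
          (a ^ Fintype.card Fq) • (fun i => x i ^ Fintype.card Fq) := by
        ext i; simp [mul_pow]
      simp only [this]
      exact Submodule.smul_mem _ _ hx
  refine Set.eq_of_subset_of_ncard_le hsub ?_ (Set.toFinite _)
  rw [Set.ncard_image_of_injective]
  intro x y hxy
  ext i
  exact (FiniteField.frobeniusAlgHom Fq F).toRingHom.injective (congrFun hxy i)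

open Module in
lemma aux_RGRW_le (q : ℕ) (Fq : Type*) {F : Type*} [Field Fq] [Field F] [Algebra Fq F]
    [Fintype Fq] [Fintype F] (hq : Fintype.card Fq = q) {n : ℕ} (C1 C2 : Submodule F (Fin n → F))
    {i : ℕ} {T : Finset (Fin n → F)} (hT : AuxGood q T)
    (h : finrank F ↥(C2 ⊓ auxSp T) + i ≤ finrank F ↥(C1 ⊓ auxSp T)) :
    RGRW q C1 C2 i ≤ T.card :=
  Nat.sInf_le ⟨auxSp T, aux_closed_s3 q Fq hq (fun v hv => hT.1 v (by exact_mod_cast hv)),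
    hT.finrank.symm, by omega⟩

/-- a finite set of rational vectors can be thinned to an independent one -/
lemma aux_thin {q : ℕ} {F : Type*} [Field F] {n : ℕ} (S : Finset (Fin n → F))
    (hS : ∀ v ∈ S, ∀ j, v j ^ q = v j) :
    ∃ T : Finset (Fin n → F), AuxGood q T ∧ T.card ≤ S.card ∧ auxSp T = auxSp S := by
  classical
  obtain ⟨b, hb, hsp, hli⟩ := exists_linearIndependent F (S : Set (Fin n → F))
  have hfin : b.Finite := S.finite_toSet.subset hb
  have hbS : hfin.toFinset ⊆ S := by
    intro x hx
    have := hb (hfin.mem_toFinset.mp hx)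
    exact_mod_cast this
  refine ⟨hfin.toFinset, ⟨fun v hv => hS v (hbS hv), ?_⟩, Finset.card_le_card hbS, ?_⟩
  · rw [Set.Finite.coe_toFinset]; exact hli
  · rw [auxSp, Set.Finite.coe_toFinset]; exact hsp

open Module in
lemma aux_cover (q : ℕ) (Fq : Type*) {F : Type*} [Field Fq] [Field F] [Algebra Fq F]
    [Fintype Fq] [Fintype F] (hq : Fintype.card Fq = q) {n : ℕ} (W : Submodule F (Fin n → F)) :
    ∃ T : Finset (Fin n → F), AuxGood q T ∧ T.card ≤ finrank Fq F * finrank F W ∧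
      W ≤ auxSp T := by
  classical
  let β := Module.finBasis Fq F
  let w := Module.finBasis F W
  let u : Fin (finrank Fq F) × Fin (finrank F W) → (Fin n → F) :=
    fun p j => algebraMap Fq F (β.repr ((w p.2 : Fin n → F) j) p.1)
  obtain ⟨T, hT, hc, hsp⟩ := aux_thin (q := q) (Finset.univ.image u) (by
    intro v hv j
    simp only [Finset.mem_image, Finset.mem_univ, true_and] at hv
    obtain ⟨p, rfl⟩ := hv
    simp only [u]
    rw [← map_pow, ← hq, FiniteField.pow_card])
  refine ⟨T, hT, hc.trans (Finset.card_image_le.trans (by simp)), ?_⟩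
  rw [hsp]
  have hw : ∀ s, (w s : Fin n → F) ∈ auxSp (Finset.univ.image u) := by
    intro s
    have : (w s : Fin n → F) = ∑ a, β a • u (a, s) := by
      ext j
      rw [Finset.sum_apply]
      conv_lhs => rw [← β.sum_repr ((w s : Fin n → F) j)]
      refine Finset.sum_congr rfl fun a _ => ?_
      simp [u, Algebra.smul_def, mul_comm]
    rw [this]
    refine Submodule.sum_mem _ fun a _ => Submodule.smul_mem _ _ (Submodule.subset_span ?_)
    simp
  intro x hx
  have := w.sum_repr ⟨x, hx⟩
  have h2 : x = ∑ s, w.repr ⟨x, hx⟩ s • (w s : Fin n → F) := by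
    have h3 := congrArg W.subtype this
    rw [map_sum] at h3
    simp only [map_smul, Submodule.subtype_apply] at h3
    exact h3.symm
  rw [h2]
  exact Submodule.sum_mem _ fun s _ => Submodule.smul_mem _ _ (hw s)

/-- For `1 ≤ i ≤ dim C1 - dim C2`, the `i`-th RGRW satisfies
`M_{R,i}(C1,C2) ≤ min{ n - dim C1, (m-1)(dim C1 - dim C2) } + i`. -/
theorem stmt3 (m n : ℕ) [Fintype Fq] [Fintype Fqm]
    (hq : Fintype.card Fq = q) (hm : Module.finrank Fq Fqm = m)
    (C1 C2 : Submodule Fqm (Fin n → Fqm)) (h12 : C2 < C1) :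
    ∀ i, 1 ≤ i → i ≤ Module.finrank Fqm ↥C1 - Module.finrank Fqm ↥C2 →
      RGRW q C1 C2 i ≤
        min (n - Module.finrank Fqm ↥C1)
          ((m - 1) * (Module.finrank Fqm ↥C1 - Module.finrank Fqm ↥C2)) + i := by
  intro i hi hik
  have hlt : Module.finrank Fqm C2 < Module.finrank Fqm C1 :=
    Submodule.finrank_lt_finrank_of_lt h12
  have hn : Module.finrank Fqm C1 ≤ n := by
    simpa using Submodule.finrank_le C1
  obtain ⟨k, hk⟩ := Nat.exists_eq_add_of_lt hlt
  obtain ⟨t, ht⟩ := Nat.exists_eq_add_of_le hik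
  have hm1 : 1 ≤ m := hm ▸ Module.finrank_pos
  rw [Nat.min_def]
  have A : RGRW q C1 C2 i ≤ n - Module.finrank Fqm C1 + i := by
    obtain ⟨T, hT, hTc, hTs⟩ := aux_cover q Fq hq (⊤ : Submodule Fqm (Fin n → Fqm))
    have hTs : auxSp T = ⊤ := top_le_iff.mp hTs
    have hcard : T.card = n := by
      have := hT.finrank
      rw [hTs] at this
      simpa using this.symm
    obtain ⟨T1, g1, c1, f1⟩ := aux_kill C1 C2 (i + t) (Module.finrank Fqm C2) T hT
      (by rw [hTs, inf_top_eq]) (by rw [hTs, inf_top_eq, inf_top_eq]; omega)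
    obtain ⟨T2, g2, c2, f2⟩ := aux_descend C1 C2 i t T1 g1 f1
    have := aux_RGRW_le q Fq hq C1 C2 g2 f2
    omega
  have B : RGRW q C1 C2 i ≤
      (m - 1) * (Module.finrank Fqm C1 - Module.finrank Fqm C2) + i := by
    obtain ⟨W0, hW0⟩ := exists_isCompl C2
    let W := C1 ⊓ W0
    have hsup : C2 ⊔ W = C1 := by
      have := sup_inf_assoc_of_le W0 h12.le
      rw [hW0.sup_eq_top, top_inf_eq] at this
      rw [this, inf_comm]
    have hinf : C2 ⊓ W = ⊥ := by
      rw [eq_bot_iff, ← hW0.inf_eq_bot]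
      exact inf_le_inf_left _ inf_le_right
    have hd := Submodule.finrank_sup_add_finrank_inf_eq C2 W
    rw [hsup, hinf, finrank_bot] at hd
    obtain ⟨T, hT, hTc, hTs⟩ := aux_cover q Fq hq W
    have hd2 := Submodule.finrank_sup_add_finrank_inf_eq (C2 ⊓ auxSp T) W
    have hinf2 : C2 ⊓ auxSp T ⊓ W = ⊥ := by
      rw [eq_bot_iff, ← hinf]
      exact inf_le_inf_right _ inf_le_left
    have hle : Module.finrank Fqm ↥(C2 ⊓ auxSp T ⊔ W) ≤ Module.finrank Fqm ↥(C1 ⊓ auxSp T) :=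
      Submodule.finrank_mono (sup_le (inf_le_inf_right _ h12.le) (le_inf inf_le_left hTs))
    rw [hinf2, finrank_bot] at hd2
    obtain ⟨T2, g2, c2, f2⟩ := aux_descend C1 C2 i t T hT (by omega)
    have := aux_RGRW_le q Fq hq C1 C2 g2 f2
    have hW : Module.finrank Fqm W = Module.finrank Fqm C1 - Module.finrank Fqm C2 := by omega
    rw [hm, hW] at hTc
    obtain ⟨m', rfl⟩ := Nat.exists_eq_add_of_le' hm1
    rw [Nat.add_mul] at hTc
    simp only [Nat.add_sub_cancel]
    omega
  split_ifs
  · exact A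
  · exact B

end
end

section
/- Let b ∈ F_{q^m}^n be a nonzero vector, let ⟨b⟩ ⊆ F_{q^m}^n be the one-dimensional F_{q^m}-subspace spanned by b, and let ⟨b⟩* = Σ_{i=0}^{m−1} ⟨b⟩^{q^i}. Then dim ⟨b⟩* = d_R(b,0), i.e., the F_{q^m}-dimension of ⟨b⟩* equals the rank weight of b. -/
open scoped BigOperators

noncomputable section

variable (q : ℕ) (Fq : Type*) {Fqm : Type*} [Field Fq] [Field Fqm] [Algebra Fq Fqm]

/-- `V* = Σ_{k=0}^{m-1} V^{q^k}`: the sum of the subspaces obtained from `V` by the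
iterated coordinatewise `q`-power maps. -/
noncomputable def qStar (m : ℕ) {n : ℕ} (V : Submodule Fqm (Fin n → Fqm)) :
    Submodule Fqm (Fin n → Fqm) :=
  ⨆ k ∈ Finset.range m, Submodule.span Fqm
    ((fun v : Fin n → Fqm => fun i => v i ^ q ^ k) '' (V : Set (Fin n → Fqm)))

open Module in
theorem aux_span_frob [Fintype Fq] [Fintype Fqm] :
    Submodule.span Fqm (Set.range fun k : Fin (finrank Fq Fqm) =>
      ((FiniteField.frobeniusAlgHom Fq Fqm) ^ (k : ℕ)).toLinearMap) = ⊤ := by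
  have hinj : Function.Injective (fun k : Fin (finrank Fq Fqm) =>
      (FiniteField.frobeniusAlgHom Fq Fqm) ^ (k : ℕ)) :=
    (FiniteField.bijective_frobeniusAlgHom_pow Fq Fqm).1
  have hli := (linearIndependent_toLinearMap Fq Fqm Fqm).comp _ hinj
  have : finrank Fqm (Fqm →ₗ[Fq] Fqm) = finrank Fq Fqm := finrank_linearMap_self Fq Fqm Fqm
  exact hli.span_eq_top_of_card_eq_finrank' (by simp [this])

/-- Evaluation of linear maps at the coordinates of `b`. -/
def auxEv (Fq : Type*) {Fqm : Type*} [Field Fq] [Field Fqm] [Algebra Fq Fqm]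
    {n : ℕ} (b : Fin n → Fqm) : (Fqm →ₗ[Fq] Fqm) →ₗ[Fqm] (Fin n → Fqm) where
  toFun f := fun i => f (b i)
  map_add' _ _ := rfl
  map_smul' _ _ := rfl

/-- Evaluation on the span. -/
def auxEvS (Fq : Type*) {Fqm : Type*} [Field Fq] [Field Fqm] [Algebra Fq Fqm]
    {n : ℕ} (b : Fin n → Fqm) :
    (Submodule.span Fq (Set.range b) →ₗ[Fq] Fqm) →ₗ[Fqm] (Fin n → Fqm) where
  toFun f := fun i => f ⟨b i, Submodule.subset_span ⟨i, rfl⟩⟩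
  map_add' _ _ := rfl
  map_smul' _ _ := rfl

theorem auxEvS_inj {n : ℕ} (b : Fin n → Fqm) : Function.Injective (auxEvS Fq b) := by
  intro f g h
  apply LinearMap.ext
  rintro ⟨x, hx⟩
  induction hx using Submodule.span_induction with
  | mem x hx =>
    obtain ⟨i, rfl⟩ := hx
    exact congrFun h i
  | zero => exact (map_zero f).trans (map_zero g).symm
  | add x y hx hy h1 h2 =>
    have := congrArg₂ (· + ·) h1 h2
    simp only [← map_add] at this
    exact this
  | smul a x hx h1 =>
    have := congrArg (a • ·) h1
    simp only [← map_smul] at this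
    exact this

theorem auxEv_range {n : ℕ} (b : Fin n → Fqm) :
    LinearMap.range (auxEv Fq b) = LinearMap.range (auxEvS Fq b) := by
  ext v
  constructor
  · rintro ⟨f, rfl⟩
    exact ⟨f.comp (Submodule.subtype _), rfl⟩
  · rintro ⟨f, rfl⟩
    obtain ⟨g, hg⟩ := LinearMap.exists_extend f
    refine ⟨g, ?_⟩
    subst hg
    rfl

theorem aux_qStar [Fintype Fq] [Fintype Fqm] {n : ℕ} (b : Fin n → Fqm) :
    qStar (Fintype.card Fq) (Module.finrank Fq Fqm) (Submodule.span Fqm {b}) =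
      LinearMap.range (auxEv Fq b) := by
  have hpow : ∀ (k : ℕ) (x : Fqm), ((FiniteField.frobeniusAlgHom Fq Fqm) ^ k) x
      = x ^ (Fintype.card Fq) ^ k := by
    intro k
    induction k with
    | zero => intro x; simp
    | succ k ih =>
      intro x
      rw [pow_succ, AlgHom.mul_apply, ih, FiniteField.coe_frobeniusAlgHom, ← pow_mul, pow_succ,
        mul_comm]
  rw [LinearMap.range_eq_map, ← aux_span_frob Fq, Submodule.map_span]
  apply le_antisymm
  · refine iSup₂_le fun k hk => Submodule.span_le.2 ?_
    rintro _ ⟨v, hv, rfl⟩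
    obtain ⟨c, rfl⟩ := Submodule.mem_span_singleton.1 hv
    have : (fun i => (c • b) i ^ (Fintype.card Fq) ^ k) =
        (c ^ (Fintype.card Fq) ^ k) • auxEv Fq b
          ((FiniteField.frobeniusAlgHom Fq Fqm) ^ k).toLinearMap := by
      ext i
      simp [auxEv, hpow, mul_pow]
    simp only [this]
    exact Submodule.smul_mem _ _ (Submodule.subset_span
      ⟨_, ⟨⟨k, Finset.mem_range.1 hk⟩, rfl⟩, rfl⟩)
  · rw [Submodule.span_le]
    rintro _ ⟨_, ⟨k, rfl⟩, rfl⟩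
    refine Submodule.mem_iSup_of_mem (k : ℕ) (Submodule.mem_iSup_of_mem
      (Finset.mem_range.2 k.2) (Submodule.subset_span
        ⟨b, Submodule.mem_span_singleton_self b, ?_⟩))
    ext i
    simp [auxEv, hpow]

/-- For a nonzero vector `b ∈ F_{q^m}^n`,
`dim ⟨b⟩* = d_R(b,0)`: the `F_{q^m}`-dimension of `⟨b⟩* = Σ_{i=0}^{m-1} ⟨b⟩^{q^i}`
equals the rank weight of `b`. -/
theorem stmt4 (m n : ℕ) [Fintype Fq] [Fintype Fqm]
    (hq : Fintype.card Fq = q) (hm : Module.finrank Fq Fqm = m)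
    (b : Fin n → Fqm) (hb : b ≠ 0) :
    Module.finrank Fqm ↥(qStar q m (Submodule.span Fqm {b})) = rankWeight Fq b := by
  subst hq hm
  rw [aux_qStar, auxEv_range, LinearMap.finrank_range_of_inj (auxEvS_inj Fq b)]
  exact Module.finrank_linearMap_self Fq Fqm _

end
end

section
/- Let C1 ⊆ F_{q^m}^n be a linear code and C2 ⊊ C1 a subcode. Then the first RGRW satisfies M_{R,1}(C1,C2) = min{ d_R(x,0) : x ∈ C1 \ C2 }. -/
open scoped BigOperators

noncomputable section

variable (q : ℕ) (Fq : Type*) {Fqm : Type*} [Field Fq] [Field Fqm] [Algebra Fq Fqm]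

/-- Every vector lies in a Galois closed space of dimension at most its rank weight. -/
theorem exists_galClosed {n : ℕ} [Fintype Fq] [Fintype Fqm] (hq : Fintype.card Fq = q)
    (x : Fin n → Fqm) :
    ∃ V : Submodule Fqm (Fin n → Fqm), IsGalClosed q V ∧ x ∈ V ∧
      Module.finrank Fqm V ≤ rankWeight Fq x := by
  subst hq
  let S := Submodule.span Fq (Set.range x)
  let b := Module.finBasis Fq S
  let y : Fin n → S := fun i => ⟨x i, Submodule.subset_span ⟨i, rfl⟩⟩
  let a : Fin (Module.finrank Fq S) → Fin n → Fqm := fun j i => algebraMap Fq Fqm (b.repr (y i) j)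
  let σ := FiniteField.frobeniusAlgEquivOfAlgebraic Fq Fqm
  have hσ : ∀ z, σ z = z ^ Fintype.card Fq := fun z => rfl
  have key : ∀ c : Fin (Module.finrank Fq S) → Fqm,
      (fun i => (∑ j, c j • a j) i ^ Fintype.card Fq) = ∑ j, σ (c j) • a j := by
    intro c
    funext i
    rw [← hσ]
    simp [a]
  refine ⟨Submodule.span Fqm (Set.range a), ?_, ?_, ?_⟩
  · ext v
    simp only [Set.mem_image, SetLike.mem_coe, Submodule.mem_span_range_iff_exists_fun]
    constructor
    · rintro ⟨w, ⟨c, rfl⟩, rfl⟩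
      exact ⟨fun j => σ (c j), (key c).symm⟩
    · rintro ⟨c, rfl⟩
      refine ⟨_, ⟨fun j => σ.symm (c j), rfl⟩, ?_⟩
      rw [key]
      simp
  · rw [Submodule.mem_span_range_iff_exists_fun]
    refine ⟨fun j => (b j : Fqm), ?_⟩
    funext i
    have h := congrArg (fun s : S => (s : Fqm)) (b.sum_repr (y i))
    simp only [Submodule.coe_sum, Submodule.coe_smul, Algebra.smul_def] at h
    simpa [a, mul_comm] using h
  · exact (finrank_range_le_card a).trans (by simp [rankWeight, S])

/-- The rank weight of a vector in a Galois closed space is at most its dimension. -/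
theorem rankWeight_le_of_mem {n : ℕ} [Fintype Fq] [Fintype Fqm] (hq : Fintype.card Fq = q)
    (V : Submodule Fqm (Fin n → Fqm)) (hV : IsGalClosed q V) (x : Fin n → Fqm) (hx : x ∈ V) :
    rankWeight Fq x ≤ Module.finrank Fqm V := by
  subst hq
  have hpow : ∀ (t : ℕ) (v : Fin n → Fqm), v ∈ V →
      (fun i => v i ^ (Fintype.card Fq ^ t)) ∈ V := by
    intro t
    induction t with
    | zero => intro v hv; simpa using hv
    | succ t ih =>
      intro v hv
      have h : (fun i => (v i ^ (Fintype.card Fq ^ t)) ^ Fintype.card Fq) ∈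
          (V : Set (Fin n → Fqm)) := by
        rw [← hV]
        exact ⟨_, ih v hv, rfl⟩
      simpa [pow_succ, pow_mul] using h
  have htr : ∀ v : Fin n → Fqm, v ∈ V →
      (fun i => algebraMap Fq Fqm (Algebra.trace Fq Fqm (v i))) ∈ V := by
    intro v hv
    have h : (fun i => algebraMap Fq Fqm (Algebra.trace Fq Fqm (v i))) =
        ∑ t ∈ Finset.range (Module.finrank Fq Fqm),
          (fun i => v i ^ (Fintype.card Fq ^ t)) := by
      funext i
      rw [FiniteField.algebraMap_trace_eq_sum_pow, Finset.sum_apply, Nat.card_eq_fintype_card]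
    rw [h]
    exact Submodule.sum_mem _ fun t _ => hpow t v hv
  let b := Module.finBasis Fq Fqm
  let b' := (Algebra.traceForm Fq Fqm).dualBasis (traceForm_nondegenerate Fq Fqm) b
  -- the rational points of `V`
  let φ : (Fin n → Fq) →ₗ[Fq] (Fin n → Fqm) := (Algebra.linearMap Fq Fqm).compLeft (Fin n)
  let U : Submodule Fq (Fin n → Fq) := (V.restrictScalars Fq).comap φ
  let e := Module.finBasis Fq U
  have hli : LinearIndependent Fqm (fun l => φ (e l : Fin n → Fq)) := by
    have h0 : LinearIndependent Fq (fun l => (e l : Fin n → Fq)) :=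
      e.linearIndependent.map' U.subtype U.ker_subtype
    exact (linearIndependent_algebraMap_comp_iff (S := Fqm)
      (v := fun l => (e l : Fin n → Fq))).2 h0
  have hcard : Module.finrank Fq U ≤ Module.finrank Fqm V := by
    let f : Fin (Module.finrank Fq U) → V := fun l => ⟨φ (e l), (e l).2⟩
    have hf : LinearIndependent Fqm f := LinearIndependent.of_comp V.subtype hli
    simpa using hf.fintype_card_le_finrank
  let T : Fin (Module.finrank Fq Fqm) → U := fun j =>
    ⟨fun i => Algebra.trace Fq Fqm (b j * x i), htr _ (V.smul_mem (b j) hx)⟩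
  let c : Fin (Module.finrank Fq U) → Fqm := fun l => ∑ j, e.repr (T j) l • b' j
  have hxc : ∀ i, x i = ∑ l, (e l : Fin n → Fq) i • c l := by
    intro i
    have h1 : ∀ j, Algebra.trace Fq Fqm (b j * x i) =
        ∑ l, e.repr (T j) l * (e l : Fin n → Fq) i := by
      intro j
      have h := congrArg (fun s : U => (s : Fin n → Fq) i) (e.sum_repr (T j))
      simp only [Submodule.coe_sum, Submodule.coe_smul, Finset.sum_apply, Pi.smul_apply,
        smul_eq_mul] at h
      exact h.symm
    calc x i = ∑ j, b'.repr (x i) j • b' j := (b'.sum_repr (x i)).symm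
      _ = ∑ j, Algebra.trace Fq Fqm (b j * x i) • b' j := by
        refine Finset.sum_congr rfl fun j _ => ?_
        rw [LinearMap.BilinForm.dualBasis_repr_apply, Algebra.traceForm_apply, mul_comm]
      _ = ∑ l, (e l : Fin n → Fq) i • c l := by
        simp only [h1, c, Finset.sum_smul, Finset.smul_sum, smul_smul]
        rw [Finset.sum_comm]
        simp only [mul_comm]
  have hle : Submodule.span Fq (Set.range x) ≤ Submodule.span Fq (Set.range c) := by
    rw [Submodule.span_le]
    rintro _ ⟨i, rfl⟩
    rw [hxc i]
    exact Submodule.sum_mem _ fun l _ =>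
      Submodule.smul_mem _ _ (Submodule.subset_span ⟨l, rfl⟩)
  calc rankWeight Fq x ≤ Module.finrank Fq (Submodule.span Fq (Set.range c)) :=
        Submodule.finrank_mono hle
    _ ≤ Module.finrank Fq U := (finrank_range_le_card c).trans (by simp)
    _ ≤ _ := hcard

/-- The first RGRW satisfies
`M_{R,1}(C1,C2) = min{ d_R(x,0) : x ∈ C1 \ C2 }`. -/
theorem stmt5 (m n : ℕ) [Fintype Fq] [Fintype Fqm]
    (hq : Fintype.card Fq = q) (hm : Module.finrank Fq Fqm = m)
    (C1 C2 : Submodule Fqm (Fin n → Fqm)) (h12 : C2 < C1) :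
    RGRW q C1 C2 1 = sInf {d : ℕ | ∃ x, x ∈ C1 ∧ x ∉ C2 ∧ d = rankWeight Fq x} := by
  unfold RGRW
  apply le_antisymm
  · obtain ⟨x0, hx0, hx0'⟩ := SetLike.exists_of_lt h12
    have hne : {d : ℕ | ∃ x, x ∈ C1 ∧ x ∉ C2 ∧ d = rankWeight Fq x}.Nonempty :=
      ⟨_, x0, hx0, hx0', rfl⟩
    obtain ⟨x, hx1, hx2, hd⟩ := Nat.sInf_mem hne
    rw [hd]
    obtain ⟨V, hV, hxV, hr⟩ := exists_galClosed q Fq hq x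
    refine le_trans (Nat.sInf_le ⟨V, hV, rfl, ?_⟩) hr
    have hlt : C2 ⊓ V < C1 ⊓ V := by
      refine lt_of_le_of_ne (inf_le_inf_right V h12.le) fun h => hx2 ?_
      have hm' : x ∈ C1 ⊓ V := ⟨hx1, hxV⟩
      rw [← h] at hm'
      exact hm'.1
    have := Submodule.finrank_lt_finrank_of_lt hlt
    omega
  · have hne : {d : ℕ | ∃ V : Submodule Fqm (Fin n → Fqm), IsGalClosed q V ∧
        d = Module.finrank Fqm ↥V ∧
        1 ≤ Module.finrank Fqm ↥(C1 ⊓ V) - Module.finrank Fqm ↥(C2 ⊓ V)}.Nonempty := by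
      obtain ⟨x, hx1, hx2⟩ := SetLike.exists_of_lt h12
      obtain ⟨V, hV, hxV, hr⟩ := exists_galClosed q Fq hq x
      refine ⟨_, V, hV, rfl, ?_⟩
      have hlt : C2 ⊓ V < C1 ⊓ V := by
        refine lt_of_le_of_ne (inf_le_inf_right V h12.le) fun h => hx2 ?_
        have hm' : x ∈ C1 ⊓ V := ⟨hx1, hxV⟩
        rw [← h] at hm'
        exact hm'.1
      have := Submodule.finrank_lt_finrank_of_lt hlt
      omega
    obtain ⟨V, hV, hd, h1⟩ := Nat.sInf_mem hne
    rw [hd]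
    have hnle : ¬ (C1 ⊓ V ≤ C2 ⊓ V) := fun h => by
      have := Submodule.finrank_mono h
      omega
    obtain ⟨x, hx, hx'⟩ := SetLike.not_le_iff_exists.1 hnle
    refine le_trans (Nat.sInf_le ⟨x, hx.1, fun h => hx' ⟨h, hx.2⟩, rfl⟩) ?_
    exact rankWeight_le_of_mem q Fq hq V hV x hx.2

end
end

section
/- Let m ≥ n and let C ⊆ F_{q^m}^n be a nonzero linear code. Then M_{R,i}(C,{0}) ≤ (n − dim C) + i for all 1 ≤ i ≤ dim C, and equality holds for all such i if and only if C is an MRD code (i.e., d_R(C) = n − dim C + 1). -/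
open scoped BigOperators

noncomputable section

variable (q : ℕ) (Fq : Type*) {Fqm : Type*} [Field Fq] [Field Fqm] [Algebra Fq Fqm]

section Helpers

/-- Extension of scalars of a vector with entries in the base field. -/
def extVec (K : Type*) (L : Type*) [Field K] [Field L] [Algebra K L] {n : ℕ}
    (w : Fin n → K) : Fin n → L := fun j => algebraMap K L (w j)

theorem rankWeight_le_card {K L : Type*} [Field K] [Field L] [Algebra K L]
    {n : ℕ} {ι : Type*} [Fintype ι] (w : ι → Fin n → K) (x : Fin n → L)
    (hx : x ∈ Submodule.span L (Set.range (fun l => extVec K L (w l)))) :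
    rankWeight K x ≤ Fintype.card ι := by
  obtain ⟨a, rfl⟩ := (Submodule.mem_span_range_iff_exists_fun _).1 hx
  unfold rankWeight
  have := FiniteDimensional.span_of_finite K (Set.finite_range a)
  refine le_trans (Submodule.finrank_mono (t := Submodule.span K (Set.range a)) ?_)
    (finrank_range_le_card a)
  rw [Submodule.span_le]
  rintro _ ⟨j, rfl⟩
  simp only [Finset.sum_apply, Pi.smul_apply, extVec, smul_eq_mul, SetLike.mem_coe]
  refine Submodule.sum_mem _ fun l _ => ?_
  rw [mul_comm, ← Algebra.smul_def]
  exact Submodule.smul_mem _ _ (Submodule.subset_span ⟨l, rfl⟩)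

theorem exists_ratl_of_rankWeight {K L : Type*} [Field K] [Field L] [Algebra K L]
    [FiniteDimensional K L] {n : ℕ} (x : Fin n → L) :
    ∃ w : Fin (rankWeight K x) → Fin n → K,
      x ∈ Submodule.span L (Set.range (fun l => extVec K L (w l))) := by
  let S := Submodule.span K (Set.range x)
  let b := Module.finBasis K S
  have hxS : ∀ j, x j ∈ S := fun j => Submodule.subset_span ⟨j, rfl⟩
  refine ⟨fun l j => b.repr ⟨x j, hxS j⟩ l, ?_⟩
  rw [Submodule.mem_span_range_iff_exists_fun]
  refine ⟨fun l => (b l : L), ?_⟩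
  ext j
  have := congrArg (Subtype.val) (b.sum_repr ⟨x j, hxS j⟩)
  simp only [Finset.sum_apply, Pi.smul_apply, extVec, smul_eq_mul]
  rw [Submodule.coe_sum] at this
  refine Eq.trans (Finset.sum_congr rfl fun l _ => ?_) this
  rw [mul_comm, ← Algebra.smul_def]
  rfl

theorem isGalClosed_span {K L : Type*} [Field K] [Field L] [Algebra K L]
    [Fintype K] [Fintype L] {n : ℕ} {ι : Type*} [Fintype ι] (w : ι → Fin n → K) :
    IsGalClosed (Fintype.card K)
      (Submodule.span L (Set.range (fun l => extVec K L (w l)))) := by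
  unfold IsGalClosed
  refine Set.BijOn.image_eq ?_
  rw [← Set.Finite.injOn_iff_bijOn_of_mapsTo (Set.toFinite _)]
  · intro u _ v _ h
    ext j
    exact (FiniteField.frobeniusAlgHom K L).injective (congrFun h j)
  · intro v hv
    obtain ⟨a, rfl⟩ := (Submodule.mem_span_range_iff_exists_fun _).1 hv
    refine (Submodule.mem_span_range_iff_exists_fun _).2 ⟨fun l => a l ^ Fintype.card K, ?_⟩
    ext j
    have h := map_sum (FiniteField.frobeniusAlgHom K L)
      (fun l => a l * algebraMap K L (w l j)) Finset.univ
    simp only [map_mul, AlgHom.commutes] at h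
    simp only [Finset.sum_apply, Pi.smul_apply, extVec, smul_eq_mul]
    exact h.symm

/-- Galois descent. -/
theorem exists_ratl_basis {K L : Type*} [Field K] [Field L] [Algebra K L]
    [Fintype K] [Fintype L] {n : ℕ} (V : Submodule L (Fin n → L))
    (hV : IsGalClosed (Fintype.card K) V) :
    ∃ w : Fin (Module.finrank L V) → Fin n → K,
      LinearIndependent L (fun l => extVec K L (w l)) ∧
      Submodule.span L (Set.range (fun l => extVec K L (w l))) = V := by
  classical
  have hpow : ∀ (t : ℕ) (v : Fin n → L), v ∈ V →
      (fun j => v j ^ (Fintype.card K ^ t)) ∈ V := by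
    intro t
    induction t with
    | zero => intro v hv; simpa using hv
    | succ t ih =>
      intro v hv
      have h1 : (fun j => (v j ^ (Fintype.card K ^ t)) ^ Fintype.card K) ∈ (V : Set _) := by
        rw [← hV]
        exact ⟨_, ih v hv, rfl⟩
      simp only [pow_succ, pow_mul]
      exact h1
  let W : Set (Fin n → K) := {w | extVec K L w ∈ V}
  have htr : ∀ v ∈ V, ∀ c : L, (fun j => Algebra.trace K L (v j * c)) ∈ W := by
    intro v hv c
    have h2 : (∑ t ∈ Finset.range (Module.finrank K L),
        (fun j => (c • v) j ^ (Fintype.card K ^ t))) ∈ V :=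
      Submodule.sum_mem _ fun t _ => hpow t _ (V.smul_mem c hv)
    change extVec K L _ ∈ V
    convert h2 using 1
    ext j
    simp only [extVec, FiniteField.algebraMap_trace_eq_sum_pow, Finset.sum_apply,
      Pi.smul_apply, smul_eq_mul, Nat.card_eq_fintype_card, mul_comm]
  have hspan : Submodule.span L (Set.range (fun w : W => extVec K L w.1)) = V := by
    apply le_antisymm
    · rw [Submodule.span_le]
      rintro _ ⟨w, rfl⟩
      exact w.2
    · intro v hv
      let b := Module.finBasis K L
      let d := (Algebra.traceForm K L).dualBasis (traceForm_nondegenerate K L) b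
      have hv' : v = ∑ i, d i • extVec K L (fun j => Algebra.trace K L (v j * b i)) := by
        ext j
        have h3 := d.sum_repr (v j)
        simp only [Finset.sum_apply, Pi.smul_apply, extVec, smul_eq_mul]
        refine h3.symm.trans (Finset.sum_congr rfl fun l _ => ?_)
        rw [mul_comm, ← Algebra.smul_def]
        congr 1
        exact (Algebra.traceForm K L).dualBasis_repr_apply _ b _ l
      rw [hv']
      refine Submodule.sum_mem _ fun i _ => Submodule.smul_mem _ _ ?_
      exact Submodule.subset_span ⟨⟨_, htr v hv (b i)⟩, rfl⟩
  obtain ⟨κ, a, ha, hsp, hli⟩ := exists_linearIndependent' L (fun w : W => extVec K L w.1)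
  have : Finite κ := Finite.of_injective a ha
  have := Fintype.ofFinite κ
  rw [hspan] at hsp
  have hcard : Fintype.card κ = Module.finrank L V := by
    rw [← hsp, finrank_span_eq_card hli]
  let e : Fin (Module.finrank L V) ≃ κ := (finCongr hcard.symm).trans (Fintype.equivFin κ).symm
  refine ⟨fun l => (a (e l)).1, hli.comp e e.injective, ?_⟩
  refine Eq.trans ?_ hsp
  congr 1
  exact e.surjective.range_comp ((fun w : W => extVec K L w.1) ∘ a)

theorem finrank_inf_ge {L : Type*} [Field L] {n : ℕ} (A B U : Submodule L (Fin n → L))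
    (hA : A ≤ U) (hB : B ≤ U) :
    Module.finrank L A + Module.finrank L B ≤
      Module.finrank L U + Module.finrank L ↥(A ⊓ B) := by
  rw [← Submodule.finrank_sup_add_finrank_inf_eq A B]
  exact Nat.add_le_add_right (Submodule.finrank_mono (sup_le hA hB)) _

theorem minRankDist_le {K L : Type*} [Field K] [Field L] [Algebra K L] {n : ℕ}
    (C : Submodule L (Fin n → L)) (x : Fin n → L) (hx : x ∈ C) (h0 : x ≠ 0) :
    minRankDist K C ≤ rankWeight K x :=
  Nat.sInf_le ⟨x, hx, h0, rfl⟩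

theorem RGRW_bound {K L : Type*} [Field K] [Field L] [Algebra K L]
    [Fintype K] [Fintype L] {n : ℕ} (C : Submodule L (Fin n → L)) (i : ℕ)
    (hi : i ≤ Module.finrank L C) :
    (∃ V : Submodule L (Fin n → L), IsGalClosed (Fintype.card K) V ∧
      n - Module.finrank L C + i = Module.finrank L V ∧
      i ≤ Module.finrank L ↥(C ⊓ V) - Module.finrank L ↥((⊥ : Submodule L (Fin n → L)) ⊓ V)) := by
  have hk : Module.finrank L C ≤ n := by
    simpa using Submodule.finrank_le C
  have hr : n - Module.finrank L C + i ≤ n := by omega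
  let w : Fin (n - Module.finrank L C + i) → Fin n → K := fun l => Pi.single (Fin.castLE hr l) 1
  have hw : (fun l => extVec K L (w l)) = (Pi.basisFun L (Fin n)) ∘ Fin.castLE hr := by
    ext l j
    simp [extVec, w, Pi.single_apply, apply_ite]
  have hfin : Module.finrank L (Submodule.span L (Set.range (fun l => extVec K L (w l)))) =
      n - Module.finrank L C + i := by
    rw [finrank_span_eq_card, Fintype.card_fin]
    rw [hw]
    exact (Pi.basisFun L (Fin n)).linearIndependent.comp _ (Fin.castLE_injective hr)
  refine ⟨_, isGalClosed_span w, hfin.symm, ?_⟩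
  have := finrank_inf_ge C _ ⊤ le_top (le_top :
    Submodule.span L (Set.range (fun l => extVec K L (w l))) ≤ ⊤)
  rw [hfin, finrank_top, Module.finrank_fin_fun] at this
  rw [bot_inf_eq, finrank_bot]
  omega

theorem minRankDist_lower {K L : Type*} [Field K] [Field L] [Algebra K L]
    [Fintype K] [Fintype L] {n : ℕ} (C V : Submodule L (Fin n → L)) (i : ℕ) (h1 : 1 ≤ i)
    (hV : IsGalClosed (Fintype.card K) V) (hi : i ≤ Module.finrank L ↥(C ⊓ V)) :
    minRankDist K C + i ≤ Module.finrank L V + 1 := by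
  obtain ⟨w, hli, hsp⟩ := exists_ratl_basis (K := K) V hV
  have hiV : i ≤ Module.finrank L V :=
    hi.trans (Submodule.finrank_mono inf_le_right)
  have hr : Module.finrank L V - i + 1 ≤ Module.finrank L V := by omega
  let w' : Fin (Module.finrank L V - i + 1) → Fin n → K := fun l => w (Fin.castLE hr l)
  let V' := Submodule.span L (Set.range (fun l => extVec K L (w' l)))
  have hfin : Module.finrank L V' = Module.finrank L V - i + 1 := by
    rw [finrank_span_eq_card, Fintype.card_fin]
    exact hli.comp _ (Fin.castLE_injective hr)
  have hle : V' ≤ V := by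
    conv_rhs => rw [← hsp]
    apply Submodule.span_mono
    rintro _ ⟨l, rfl⟩
    exact ⟨_, rfl⟩
  have h := finrank_inf_ge (C ⊓ V) V' V inf_le_right hle
  have hpos : 0 < Module.finrank L ↥(C ⊓ V ⊓ V') := by omega
  have hne : C ⊓ V ⊓ V' ≠ ⊥ := by
    intro h0
    rw [h0, finrank_bot] at hpos
    exact lt_irrefl _ hpos
  obtain ⟨x, hx, hx0⟩ := Submodule.exists_mem_ne_zero_of_ne_bot hne
  have h2 := minRankDist_le (K := K) C x hx.1.1 hx0
  have h3 := rankWeight_le_card w' x hx.2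
  rw [Fintype.card_fin] at h3
  omega

theorem RGRW_one_le {K L : Type*} [Field K] [Field L] [Algebra K L]
    [Fintype K] [Fintype L] {n : ℕ} (C : Submodule L (Fin n → L)) (hC : C ≠ ⊥) :
    RGRW (Fintype.card K) C ⊥ 1 ≤ minRankDist K C := by
  obtain ⟨y, hy, hy0⟩ := Submodule.exists_mem_ne_zero_of_ne_bot hC
  obtain ⟨x, hx, hx0, hd⟩ := Nat.sInf_mem
    (s := {d : ℕ | ∃ x, x ∈ C ∧ x ≠ 0 ∧ d = rankWeight K x}) ⟨_, y, hy, hy0, rfl⟩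
  change minRankDist K C = _ at hd
  rw [hd]
  obtain ⟨w, hw⟩ := exists_ratl_of_rankWeight (K := K) x
  refine le_trans (Nat.sInf_le ⟨_, isGalClosed_span w, rfl, ?_⟩)
    ((finrank_range_le_card (R := L) (fun l => extVec K L (w l))).trans (by simp))
  rw [bot_inf_eq, finrank_bot, Nat.sub_zero, Submodule.one_le_finrank_iff]
  intro h0
  have : x ∈ C ⊓ Submodule.span L (Set.range (fun l => extVec K L (w l))) := ⟨hx, hw⟩
  rw [h0] at this
  exact hx0 ((Submodule.mem_bot L).1 this)

end Helpers

/-- Let `m ≥ n` and `C ⊆ F_{q^m}^n` a nonzero linear code. Then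
`M_{R,i}(C,{0}) ≤ (n - dim C) + i` for all `1 ≤ i ≤ dim C`, with equality for all
such `i` if and only if `C` is MRD, i.e. `d_R(C) = n - dim C + 1`. -/
theorem stmt7 (m n : ℕ) [Fintype Fq] [Fintype Fqm]
    (hq : Fintype.card Fq = q) (hm : Module.finrank Fq Fqm = m) (hmn : n ≤ m)
    (C : Submodule Fqm (Fin n → Fqm)) (hC : C ≠ ⊥) :
    (∀ i, 1 ≤ i → i ≤ Module.finrank Fqm ↥C →
      RGRW q C ⊥ i ≤ (n - Module.finrank Fqm ↥C) + i) ∧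
    ((∀ i, 1 ≤ i → i ≤ Module.finrank Fqm ↥C →
        RGRW q C ⊥ i = (n - Module.finrank Fqm ↥C) + i) ↔
      minRankDist Fq C = n - Module.finrank Fqm ↥C + 1) := by
  subst hq
  have hle : ∀ i, 1 ≤ i → i ≤ Module.finrank Fqm ↥C →
      RGRW (Fintype.card Fq) C ⊥ i ≤ (n - Module.finrank Fqm ↥C) + i := by
    intro i _ hi
    exact Nat.sInf_le (RGRW_bound (K := Fq) C i hi)
  have hge : ∀ i, 1 ≤ i → i ≤ Module.finrank Fqm ↥C →
      minRankDist Fq C + i ≤ RGRW (Fintype.card Fq) C ⊥ i + 1 := by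
    intro i h1 hi
    obtain ⟨V, hV, hd, hi'⟩ := Nat.sInf_mem
      (s := {d : ℕ | ∃ V : Submodule Fqm (Fin n → Fqm), IsGalClosed (Fintype.card Fq) V ∧
        d = Module.finrank Fqm ↥V ∧
        i ≤ Module.finrank Fqm ↥(C ⊓ V) -
          Module.finrank Fqm ↥((⊥ : Submodule Fqm (Fin n → Fqm)) ⊓ V)})
      ⟨_, RGRW_bound (K := Fq) C i hi⟩
    change RGRW (Fintype.card Fq) C ⊥ i = _ at hd
    rw [hd]
    exact minRankDist_lower C V i h1 hV (hi'.trans (Nat.sub_le _ _))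
  have hk : 1 ≤ Module.finrank Fqm ↥C := Submodule.one_le_finrank_iff.2 hC
  refine ⟨hle, fun h => ?_, fun h i h1 hi => ?_⟩
  · have e1 := h 1 le_rfl hk
    have e2 := hge 1 le_rfl hk
    have e3 := RGRW_one_le (K := Fq) C hC
    omega
  · have e1 := hle i h1 hi
    have e2 := hge i h1 hi
    omega


end
end

section
/- Let m ≥ n, let C1 ⊆ F_{q^m}^n be an MRD code, and let C2 ⊊ C1 be an arbitrary subcode. Then M_{R,i}(C1,C2) = n − dim C1 + i for all 1 ≤ i ≤ dim C1 − dim C2. -/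
open scoped BigOperators

noncomputable section

variable (q : ℕ) (Fq : Type*) {Fqm : Type*} [Field Fq] [Field Fqm] [Algebra Fq Fqm]

/-- An element fixed by the `q`-Frobenius lies in the small field. -/
theorem aux_fixed [Fintype Fq] [Fintype Fqm] (hq : Fintype.card Fq = q) (x : Fqm)
    (hx : x ^ q = x) : ∃ a : Fq, algebraMap Fq Fqm a = x := by
  classical
  have h1 : 1 < q := hq ▸ Fintype.one_lt_card
  have hne : (Polynomial.X ^ q - Polynomial.X : Polynomial Fqm) ≠ 0 :=
    FiniteField.X_pow_card_sub_X_ne_zero Fqm h1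
  have hdeg : (Polynomial.X ^ q - Polynomial.X : Polynomial Fqm).natDegree = q :=
    FiniteField.X_pow_card_sub_X_natDegree_eq Fqm h1
  set P := (Polynomial.X ^ q - Polynomial.X : Polynomial Fqm) with hP
  have hsub : Finset.univ.image (algebraMap Fq Fqm) ⊆ P.roots.toFinset := by
    intro y hy
    obtain ⟨a, -, rfl⟩ := Finset.mem_image.1 hy
    rw [Multiset.mem_toFinset, Polynomial.mem_roots hne]
    have : a ^ q = a := hq ▸ FiniteField.pow_card a
    simp [hP, ← map_pow, this]
  have hcard : P.roots.toFinset.card ≤ (Finset.univ.image (algebraMap Fq Fqm)).card := by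
    rw [Finset.card_image_of_injective _ (algebraMap Fq Fqm).injective, Finset.card_univ, hq]
    exact (Multiset.toFinset_card_le _).trans ((Polynomial.card_roots' P).trans hdeg.le)
  have heq := Finset.eq_of_subset_of_card_le hsub hcard
  have hxm : x ∈ P.roots.toFinset := by
    rw [Multiset.mem_toFinset, Polynomial.mem_roots hne]
    simp [hP, hx]
  rw [← heq] at hxm
  obtain ⟨a, -, ha⟩ := Finset.mem_image.1 hxm
  exact ⟨a, ha⟩

/-- Every code has a coordinate subspace as complement. -/
theorem aux_complement {n : ℕ} (C : Submodule Fqm (Fin n → Fqm)) :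
    ∃ S : Finset (Fin n), S.card + Module.finrank Fqm ↥C = n ∧
      ∀ v ∈ C, (∀ i ∉ S, v i = 0) → v = 0 := by
  classical
  let b := Pi.basisFun Fqm (Fin n)
  obtain ⟨κ, a, ha, hspan, hli⟩ := exists_linearIndependent' Fqm (C.mkQ ∘ b)
  haveI : Finite κ := Finite.of_injective a ha
  haveI : Fintype κ := Fintype.ofFinite κ
  have htop : Submodule.span Fqm (Set.range (C.mkQ ∘ b)) = ⊤ := by
    rw [Set.range_comp, Submodule.span_image, b.span_eq, Submodule.map_top, Submodule.range_mkQ]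
  have hc : Fintype.card κ = Module.finrank Fqm ((Fin n → Fqm) ⧸ C) := by
    rw [← finrank_span_eq_card hli, hspan, htop, finrank_top]
  have hdisj : Disjoint (Submodule.span Fqm (Set.range (b ∘ a))) (LinearMap.ker C.mkQ) :=
    Submodule.range_ker_disjoint hli
  refine ⟨Finset.univ.image a, ?_, ?_⟩
  · rw [Finset.card_image_of_injective _ ha, Finset.card_univ, hc,
      Submodule.finrank_quotient_add_finrank]
    simp
  · intro v hv h0
    rw [Submodule.ker_mkQ] at hdisj
    refine Submodule.disjoint_def.1 hdisj v ?_ hv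
    rw [← b.sum_repr v]
    refine Submodule.sum_mem _ fun i _ => ?_
    by_cases hi : i ∈ Finset.univ.image a
    · obtain ⟨k, -, rfl⟩ := Finset.mem_image.1 hi
      exact Submodule.smul_mem _ _ (Submodule.subset_span ⟨k, rfl⟩)
    · have : b.repr v i = 0 := by simpa [b] using h0 i hi
      rw [this, zero_smul]
      exact Submodule.zero_mem _

/-- The coordinate subspace supported on `T`. -/
def coordSub {n : ℕ} (T : Finset (Fin n)) : Submodule Fqm (Fin n → Fqm) :=
  LinearMap.ker (LinearMap.funLeft Fqm Fqm (Subtype.val : {i // i ∉ T} → Fin n))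

theorem mem_coordSub {n : ℕ} (T : Finset (Fin n)) (v : Fin n → Fqm) :
    v ∈ coordSub T ↔ ∀ i ∉ T, v i = 0 := by
  simp [coordSub, LinearMap.mem_ker, funext_iff, LinearMap.funLeft_apply]

theorem finrank_coordSub {n : ℕ} (T : Finset (Fin n)) :
    Module.finrank Fqm ↥(coordSub (Fqm := Fqm) T) = T.card := by
  classical
  have h := LinearMap.finrank_range_add_finrank_ker
    (LinearMap.funLeft Fqm Fqm (Subtype.val : {i // i ∉ T} → Fin n))
  rw [LinearMap.range_eq_top.2
    (LinearMap.funLeft_surjective_of_injective _ _ _ Subtype.val_injective), finrank_top,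
    Module.finrank_fintype_fun_eq_card, Module.finrank_fintype_fun_eq_card, Fintype.card_fin,
    Fintype.card_subtype_compl] at h
  simp only [Fintype.card_fin, Fintype.card_coe] at h
  have := T.card_le_univ
  rw [Fintype.card_fin] at this
  unfold coordSub
  omega

theorem coordSub_closed [Fintype Fq] [Fintype Fqm] (hq : Fintype.card Fq = q) {n : ℕ}
    (T : Finset (Fin n)) : IsGalClosed q (coordSub (Fqm := Fqm) T) := by
  have hq0 : q ≠ 0 := hq ▸ Fintype.card_ne_zero
  have hinj : Function.Injective (fun x : Fqm => x ^ q) := by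
    have := (FiniteField.frobeniusAlgHom Fq Fqm).toRingHom.injective
    subst hq
    exact this
  have hsurj := Finite.surjective_of_injective hinj
  ext v
  simp only [Set.mem_image, SetLike.mem_coe, mem_coordSub]
  constructor
  · rintro ⟨w, hw, rfl⟩ i hi
    simp [hw i hi, hq0]
  · intro hv
    choose g hg using hsurj
    refine ⟨fun i => g (v i), fun i hi => ?_, funext fun i => hg _⟩
    have := hg (v i)
    rw [hv i hi] at this
    simpa [hv i hi, hq0] using this

/-- In a Galois closed space of dimension `d`, a subspace of dimension at least `i ≥ 1` contains
a nonzero vector of rank weight at most `d - (i - 1)`. -/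
theorem aux_lowWeight [Fintype Fq] [Fintype Fqm] (hq : Fintype.card Fq = q) {n : ℕ}
    (V D : Submodule Fqm (Fin n → Fqm)) (hV : IsGalClosed q V) (hD : D ≤ V) (i : ℕ) (hi : 1 ≤ i)
    (hiD : i ≤ Module.finrank Fqm ↥D) :
    ∃ v ∈ D, v ≠ 0 ∧ rankWeight Fq v + i ≤ Module.finrank Fqm ↥V + 1 := by
  classical
  have hq0 : q ≠ 0 := hq ▸ Fintype.card_ne_zero
  obtain ⟨S, hS, hS0⟩ := aux_complement V
  set d := Module.finrank Fqm ↥V with hd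
  have hTcard : (Sᶜ).card = d := by
    rw [Finset.card_compl, Fintype.card_fin]; omega
  have hDd : Module.finrank Fqm ↥D ≤ d := Submodule.finrank_mono hD
  let π : V →ₗ[Fqm] ((Sᶜ : Finset (Fin n)) → Fqm) :=
    (LinearMap.funLeft Fqm Fqm (Subtype.val : (Sᶜ : Finset (Fin n)) → Fin n)) ∘ₗ V.subtype
  have hπ : ∀ v t, π v t = v.1 t.1 := fun _ _ => rfl
  have hinj : Function.Injective π := by
    rw [← LinearMap.ker_eq_bot, LinearMap.ker_eq_bot']
    intro v hv
    apply Subtype.ext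
    refine hS0 v.1 v.2 fun j hj => ?_
    rw [← hπ v ⟨j, Finset.mem_compl.2 hj⟩, hv]; rfl
  have hsurj : Function.Surjective π := by
    refine (LinearMap.injective_iff_surjective_of_finrank_eq_finrank ?_).1 hinj
    rw [Module.finrank_fintype_fun_eq_card, Fintype.card_coe, hTcard]
  choose b hb using fun t : (Sᶜ : Finset (Fin n)) => hsurj (Pi.single t 1)
  have hbfix : ∀ t j, (b t).1 j ^ q = (b t).1 j := by
    intro t j
    have hmem : (fun j => (b t).1 j ^ q) ∈ V := by
      have : (fun j => (b t).1 j ^ q) ∈ (V : Set (Fin n → Fqm)) := by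
        rw [← hV]; exact ⟨(b t).1, (b t).2, rfl⟩
      exact this
    have : (⟨_, hmem⟩ : V) = b t := by
      apply hinj
      funext s
      rw [hπ]
      change (b t).1 s.1 ^ q = _
      rw [← hπ, hb]
      by_cases h : s = t
      · subst h; simp
      · simp [Pi.single_eq_of_ne h, hq0]
    exact congrFun (congrArg Subtype.val this) j
  choose c hc using fun t j => aux_fixed q Fq hq _ (hbfix t j)
  obtain ⟨U, hUS, hUc⟩ := Finset.exists_subset_card_eq (s := Sᶜ) (n := i - 1) (by omega)
  let ρ : D →ₗ[Fqm] (U → Fqm) :=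
    (LinearMap.funLeft Fqm Fqm (Subtype.val : U → Fin n)) ∘ₗ D.subtype
  have hker : LinearMap.ker ρ ≠ ⊥ := by
    apply LinearMap.ker_ne_bot_of_finrank_lt
    rw [Module.finrank_fintype_fun_eq_card, Fintype.card_coe, hUc]
    omega
  obtain ⟨v, hv, hv0⟩ := (Submodule.ne_bot_iff _).1 hker
  have hvU : ∀ u ∈ U, v.1 u = 0 := fun u hu =>
    congrFun (LinearMap.mem_ker.1 hv) ⟨u, hu⟩
  refine ⟨v.1, v.2, fun h => hv0 (Subtype.ext h), ?_⟩
  have hexp : ∀ j, v.1 j = ∑ t : (Sᶜ : Finset (Fin n)), v.1 t.1 * (b t).1 j := by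
    have : (⟨v.1, hD v.2⟩ : V) = ∑ t : (Sᶜ : Finset (Fin n)), v.1 t.1 • b t := by
      apply hinj
      rw [map_sum]
      funext s
      simp [hb, hπ, Finset.sum_apply, Pi.single_apply]
    intro j
    have h2 := congrFun (congrArg Subtype.val this) j
    simpa [Finset.sum_apply] using h2
  have hspan : Submodule.span Fq (Set.range v.1) ≤
      Submodule.span Fq (((Sᶜ \ U).image v.1 : Finset Fqm) : Set Fqm) := by
    rw [Submodule.span_le]
    rintro _ ⟨j, rfl⟩
    rw [hexp j]
    refine Submodule.sum_mem _ fun t _ => ?_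
    by_cases ht : t.1 ∈ U
    · rw [hvU _ ht, zero_mul]; exact Submodule.zero_mem _
    · rw [← hc t j, mul_comm, ← Algebra.smul_def]
      refine Submodule.smul_mem _ _ (Submodule.subset_span ?_)
      exact Finset.mem_coe.2 (Finset.mem_image_of_mem _ (Finset.mem_sdiff.2 ⟨t.2, ht⟩))
  have h1 : rankWeight Fq v.1 ≤ ((Sᶜ \ U).image v.1).card :=
    (Submodule.finrank_mono hspan).trans (finrank_span_finset_le_card _)
  have h2 : ((Sᶜ \ U).image v.1).card ≤ (Sᶜ \ U).card := Finset.card_image_le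
  rw [Finset.card_sdiff_of_subset hUS, hTcard, hUc] at h2
  omega

/-- Let `m ≥ n`, `C1 ⊆ F_{q^m}^n` an MRD code and `C2 ⊊ C1` an arbitrary
subcode. Then `M_{R,i}(C1,C2) = n - dim C1 + i` for all `1 ≤ i ≤ dim C1 - dim C2`. -/
theorem stmt8 (m n : ℕ) [Fintype Fq] [Fintype Fqm]
    (hq : Fintype.card Fq = q) (hm : Module.finrank Fq Fqm = m) (hmn : n ≤ m)
    (C1 C2 : Submodule Fqm (Fin n → Fqm)) (hC : C1 ≠ ⊥)
    (hMRD : minRankDist Fq C1 = n - Module.finrank Fqm ↥C1 + 1)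
    (h12 : C2 < C1) :
    ∀ i, 1 ≤ i → i ≤ Module.finrank Fqm ↥C1 - Module.finrank Fqm ↥C2 →
      RGRW q C1 C2 i = n - Module.finrank Fqm ↥C1 + i := by
  intro i hi1 hi2
  have hk : Module.finrank Fqm ↥C1 ≤ n := by
    simpa using Submodule.finrank_le C1
  have hk2 : Module.finrank Fqm ↥C2 ≤ Module.finrank Fqm ↥C1 := Submodule.finrank_mono h12.le
  have hmem : n - Module.finrank Fqm ↥C1 + i ∈ {d : ℕ | ∃ V : Submodule Fqm (Fin n → Fqm),
      IsGalClosed q V ∧ d = Module.finrank Fqm ↥V ∧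
      i ≤ Module.finrank Fqm ↥(C1 ⊓ V) - Module.finrank Fqm ↥(C2 ⊓ V)} := by
    obtain ⟨S, hS, hS0⟩ := aux_complement C2
    obtain ⟨T, hTS, hT⟩ := Finset.exists_subset_card_eq (s := S)
      (n := n - Module.finrank Fqm ↥C1 + i) (by omega)
    refine ⟨coordSub T, coordSub_closed q Fq hq T, ?_, ?_⟩
    · rw [finrank_coordSub, hT]
    · have hbot : C2 ⊓ coordSub T = ⊥ := by
        rw [Submodule.eq_bot_iff]
        rintro v ⟨hv, hvT⟩
        exact hS0 v hv fun j hj => (mem_coordSub T v).1 hvT j fun h => hj (hTS h)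
      have h1 := Submodule.finrank_sup_add_finrank_inf_eq C1 (coordSub T)
      have h2 : Module.finrank Fqm ↥(C1 ⊔ coordSub T) ≤ n := by
        simpa using Submodule.finrank_le (C1 ⊔ coordSub T)
      rw [finrank_coordSub, hT] at h1
      rw [hbot, finrank_bot]
      omega
  apply le_antisymm
  · exact Nat.sInf_le hmem
  · refine le_csInf ⟨_, hmem⟩ ?_
    rintro d ⟨V, hV, rfl, hi⟩
    obtain ⟨v, hv, hv0, hw⟩ := aux_lowWeight q Fq hq V (C1 ⊓ V) hV inf_le_right i hi1 (by omega)
    have : minRankDist Fq C1 ≤ rankWeight Fq v := Nat.sInf_le ⟨v, hv.1, hv0, rfl⟩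
    omega

end
end

section
/- Let C1 ⊆ F_{q^m}^n be a linear code and C2 ⊊ C1 a subcode. Then the first RGRW satisfies M_{R,1}(C1,C2) ≤ min{ n − dim C1, (m−1)(dim C1 − dim C2), m(n − dim C1)/(n − dim C2) } + 1, where the third term is a rational number and the inequality is understood over the rationals. -/
open scoped BigOperators

noncomputable section

variable (q : ℕ) (Fq : Type*) {Fqm : Type*} [Field Fq] [Field Fqm] [Algebra Fq Fqm]

/-- A nonzero-intersection witness bounds the first RGRW. -/
theorem rgrw_le_of_mem {n : ℕ} (C1 C2 V : Submodule Fqm (Fin n → Fqm)) (h12 : C2 ≤ C1)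
    (hV : IsGalClosed q V) (x : Fin n → Fqm) (hx1 : x ∈ C1) (hx2 : x ∉ C2) (hxV : x ∈ V) :
    RGRW q C1 C2 1 ≤ Module.finrank Fqm ↥V := by
  apply Nat.sInf_le
  refine ⟨V, hV, rfl, ?_⟩
  have hlt : C2 ⊓ V < C1 ⊓ V := by
    refine lt_of_le_of_ne (inf_le_inf_right V h12) ?_
    intro h
    have : x ∈ C2 ⊓ V := h ▸ (⟨hx1, hxV⟩ : x ∈ C1 ⊓ V)
    exact hx2 this.1
  have := Submodule.finrank_lt_finrank_of_lt hlt
  omega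

theorem galClosed_span [Fintype Fq] [Fintype Fqm] (hq : Fintype.card Fq = q) {n r : ℕ}
    (a : Fin r → Fin n → Fq) :
    IsGalClosed q (Submodule.span Fqm
      (Set.range fun j : Fin r => fun i : Fin n => algebraMap Fq Fqm (a j i))) := by
  have hqp : ∀ c : Fin r → Fqm, (fun i => (∑ j, c j • (fun i : Fin n => algebraMap Fq Fqm (a j i))) i ^ q)
      = ∑ j, (c j) ^ q • (fun i : Fin n => algebraMap Fq Fqm (a j i)) := by
    intro c
    funext i
    have h := map_sum (FiniteField.frobeniusAlgHom Fq Fqm)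
      (fun j => c j * algebraMap Fq Fqm (a j i)) Finset.univ
    simp only [FiniteField.coe_frobeniusAlgHom, Fintype.card_eq_nat_card] at h
    simp only [Finset.sum_apply, Pi.smul_apply, smul_eq_mul]
    rw [← hq, Fintype.card_eq_nat_card]
    rw [h]
    refine Finset.sum_congr rfl fun j _ => ?_
    rw [mul_pow, ← map_pow, ← Fintype.card_eq_nat_card, FiniteField.pow_card]
  have hsurj : Function.Surjective (fun c : Fqm => c ^ q) := by
    have : Function.Injective (FiniteField.frobeniusAlgHom Fq Fqm) :=
      (FiniteField.frobeniusAlgHom Fq Fqm).toRingHom.injective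
    have h2 := Finite.surjective_of_injective this
    intro c
    obtain ⟨d, hd⟩ := h2 c
    refine ⟨d, ?_⟩
    rw [← hd, ← hq]
    simp
  unfold IsGalClosed
  ext v
  simp only [Set.mem_image, SetLike.mem_coe, Submodule.mem_span_range_iff_exists_fun]
  constructor
  · rintro ⟨w, ⟨c, rfl⟩, rfl⟩
    exact ⟨fun j => c j ^ q, (hqp c).symm⟩
  · rintro ⟨c, rfl⟩
    choose d hd using fun j => hsurj (c j)
    refine ⟨_, ⟨d, rfl⟩, ?_⟩
    rw [hqp]
    simp only at hd
    simp only [hd]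

theorem rgrw_le_of_coords [Fintype Fq] [Fintype Fqm] (hq : Fintype.card Fq = q) {n : ℕ}
    (C1 C2 : Submodule Fqm (Fin n → Fqm)) (h12 : C2 ≤ C1)
    (x : Fin n → Fqm) (hx1 : x ∈ C1) (hx2 : x ∉ C2) (U : Submodule Fq Fqm)
    (hU : ∀ i, x i ∈ U) :
    RGRW q C1 C2 1 ≤ Module.finrank Fq ↥U := by
  have b := Module.finBasis Fq U
  have hg := galClosed_span q Fq (Fqm := Fqm) hq
    (fun (j : Fin (Module.finrank Fq U)) (i : Fin n) => b.repr ⟨x i, hU i⟩ j)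
  refine (rgrw_le_of_mem q C1 C2 _ h12 hg x hx1 hx2 ?_).trans ?_
  · rw [Submodule.mem_span_range_iff_exists_fun]
    refine ⟨fun j => (b j : Fqm), ?_⟩
    funext i
    have h := congrArg (Subtype.val) (b.sum_repr ⟨x i, hU i⟩)
    simp only [Submodule.coe_sum, Submodule.coe_smul] at h
    simp only [Finset.sum_apply, Pi.smul_apply, smul_eq_mul]
    refine Eq.trans (Finset.sum_congr rfl fun j _ => ?_) h
    rw [Algebra.smul_def, mul_comm]
  · exact (finrank_range_le_card _).trans (by simp)

theorem exists_infoset {K : Type*} [Field K] {n : ℕ} (k : ℕ) : ∀ (C : Submodule K (Fin n → K)),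
    Module.finrank K C ≤ k →
    ∃ J : Finset (Fin n), J.card ≤ k ∧ ∀ x ∈ C, (∀ i ∈ J, x i = 0) → x = 0 := by
  induction k with
  | zero =>
    intro C hC
    have : C = ⊥ := Submodule.finrank_eq_zero.mp (by omega)
    subst this
    exact ⟨∅, by simp, by simp⟩
  | succ k ih =>
    intro C hC
    by_cases h0 : C = ⊥
    · subst h0
      exact ⟨∅, by simp, by simp⟩
    · obtain ⟨y, hy, hy0⟩ := Submodule.exists_mem_ne_zero_of_ne_bot h0
      obtain ⟨i, hi⟩ := Function.ne_iff.mp hy0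
      have hlt : C ⊓ LinearMap.ker (LinearMap.proj (R := K) (φ := fun _ : Fin n => K) i) < C := by
        refine lt_of_le_of_ne inf_le_left fun h => hi ?_
        rw [← h] at hy
        exact hy.2
      have := Submodule.finrank_lt_finrank_of_lt hlt
      obtain ⟨J, hJ, hJx⟩ := ih _ (by omega : Module.finrank K
        ↥(C ⊓ LinearMap.ker (LinearMap.proj (R := K) (φ := fun _ : Fin n => K) i)) ≤ k)
      refine ⟨insert i J, (Finset.card_insert_le _ _).trans (by omega), fun x hx hx0 => ?_⟩
      refine hJx x ⟨hx, hx0 i (by simp)⟩ fun j hj => hx0 j (by simp [hj])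

theorem rgrw_bound1 [Fintype Fq] [Fintype Fqm] (hq : Fintype.card Fq = q) {n : ℕ}
    (C1 C2 : Submodule Fqm (Fin n → Fqm)) (h12 : C2 < C1) :
    RGRW q C1 C2 1 + Module.finrank Fqm C1 ≤ n + 1 := by
  classical
  have hlt := Submodule.finrank_lt_finrank_of_lt h12
  have hle : Module.finrank Fqm C1 ≤ n := by
    simpa using Submodule.finrank_le C1
  obtain ⟨J, hJ, hJx⟩ := exists_infoset _ C2 le_rfl
  obtain ⟨S, hJS, hS⟩ := Finset.exists_superset_card_eq (s := J)
    (n := Module.finrank Fqm C1 - 1) (by omega) (by simp; omega)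
  let f : C1 →ₗ[Fqm] (S → Fqm) :=
    (LinearMap.funLeft Fqm Fqm (Subtype.val : S → Fin n)).comp C1.subtype
  have hker : LinearMap.ker f ≠ ⊥ := by
    apply LinearMap.ker_ne_bot_of_finrank_lt
    simp [hS]
    omega
  obtain ⟨⟨x, hx⟩, hxk, hx0⟩ := Submodule.exists_mem_ne_zero_of_ne_bot hker
  have hxS : ∀ i ∈ S, x i = 0 := fun i hi => congrFun (LinearMap.mem_ker.mp hxk) ⟨i, hi⟩
  have hx2 : x ∉ C2 := fun h => hx0 (Subtype.ext (hJx x h fun i hi => hxS i (hJS hi)))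
  have h := rgrw_le_of_coords q Fq hq C1 C2 h12.le x hx hx2
    (Submodule.span Fq ((Sᶜ.image x : Finset Fqm) : Set Fqm)) (by
      intro i
      by_cases hi : i ∈ S
      · rw [hxS i hi]; exact Submodule.zero_mem _
      · exact Submodule.subset_span (by
          simp only [Finset.coe_image, Set.mem_image, Finset.mem_coe, Finset.mem_compl]
          exact ⟨i, hi, rfl⟩))
  have h2 := finrank_span_finset_le_card (R := Fq) (Sᶜ.image x)
  have h3 := Finset.card_image_le (s := Sᶜ) (f := x)
  rw [Finset.card_compl, Fintype.card_fin] at h3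
  unfold Set.finrank at h2
  omega

theorem rgrw_bound2 [Fintype Fq] [Fintype Fqm] (hq : Fintype.card Fq = q) {n : ℕ}
    (C1 C2 : Submodule Fqm (Fin n → Fqm)) (h12 : C2 < C1) :
    RGRW q C1 C2 1 ≤ Module.finrank Fq Fqm := by
  obtain ⟨x, hx, hx2⟩ := SetLike.exists_of_lt h12
  simpa using rgrw_le_of_coords q Fq hq C1 C2 h12.le x hx hx2 ⊤ (by simp)

theorem rgrw_bound3 [Fintype Fq] [Fintype Fqm] (hq : Fintype.card Fq = q) {n : ℕ}
    (C1 C2 : Submodule Fqm (Fin n → Fqm)) (h12 : C2 < C1) (r : ℕ)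
    (hr : Module.finrank Fq Fqm * (n - Module.finrank Fqm C1) <
      (n - Module.finrank Fqm C2) * r) :
    RGRW q C1 C2 1 ≤ r := by
  by_cases hrm : Module.finrank Fq Fqm ≤ r
  · exact (rgrw_bound2 q Fq hq C1 C2 h12).trans hrm
  push Not at hrm
  have hle : Module.finrank Fqm C1 ≤ n := by
    simpa using Submodule.finrank_le C1
  have hlt := Submodule.finrank_lt_finrank_of_lt h12
  obtain ⟨J, hJ, hJx⟩ := exists_infoset _ C2 le_rfl
  obtain ⟨U, hU⟩ : ∃ U : Submodule Fq Fqm, Module.finrank Fq U = r := by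
    have b := Module.finBasis Fq Fqm
    refine ⟨Submodule.span Fq (Set.range (b ∘ Fin.castLE hrm.le)), ?_⟩
    rw [finrank_span_eq_card (b.linearIndependent.comp _ (Fin.castLE_injective _))]
    simp
  classical
  let P : Fin n → Submodule Fq Fqm := fun i => if i ∈ J then ⊥ else U
  let f : C1 →ₗ[Fq] ((i : Fin n) → Fqm ⧸ P i) :=
    (LinearMap.pi fun i => (P i).mkQ.comp (LinearMap.proj i)).comp
      (C1.subtype.restrictScalars Fq)
  have hker : LinearMap.ker f ≠ ⊥ := by
    apply LinearMap.ker_ne_bot_of_finrank_lt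
    rw [Module.finrank_pi_fintype, ← Module.finrank_mul_finrank Fq Fqm C1]
    have hP : ∀ i, Module.finrank Fq (Fqm ⧸ P i) =
        if i ∈ J then Module.finrank Fq Fqm else Module.finrank Fq Fqm - r := by
      intro i
      have := Submodule.finrank_quotient_add_finrank (P i)
      by_cases hi : i ∈ J
      · have e : Module.finrank Fq (P i) = 0 := by
          have e' : P i = ⊥ := if_pos hi
          rw [e', finrank_bot]
        rw [if_pos hi]
        omega
      · have e : Module.finrank Fq (P i) = r := by
          have e' : P i = U := if_neg hi
          rw [e', hU]
        rw [if_neg hi]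
        omega
    simp only [hP]
    rw [Finset.sum_ite]
    simp only [Finset.sum_const, smul_eq_mul]
    have e1 : (Finset.univ.filter fun i => i ∈ J).card = J.card := by simp
    have e2 : (Finset.univ.filter fun i => i ∉ J).card = n - J.card := by
      have := Finset.card_compl J
      rw [Fintype.card_fin] at this
      rw [← this]
      congr 1
      ext; simp
    rw [e1, e2]
    generalize Module.finrank Fq Fqm = m at *
    generalize Module.finrank Fqm C1 = k1 at *
    generalize Module.finrank Fqm C2 = k2 at *
    generalize J.card = j at *
    obtain ⟨s, rfl⟩ := Nat.exists_eq_add_of_le hle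
    obtain ⟨t, rfl⟩ := Nat.exists_eq_add_of_le hrm.le
    obtain ⟨u, rfl⟩ := Nat.exists_eq_add_of_le hlt.le
    obtain ⟨w, rfl⟩ := Nat.exists_eq_add_of_le hJ
    have a1 : j + w + u + s - (j + w + u) = s := by omega
    have a2 : j + w + u + s - (j + w) = u + s := by omega
    have a3 : j + w + u + s - j = w + u + s := by omega
    have a4 : r + t - r = t := by omega
    rw [a1, a2] at hr
    rw [a3, a4]
    nlinarith [Nat.zero_le (w * r)]
  obtain ⟨⟨x, hx⟩, hxk, hx0⟩ := Submodule.exists_mem_ne_zero_of_ne_bot hker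
  have hxP : ∀ i, x i ∈ P i := fun i =>
    (Submodule.Quotient.mk_eq_zero _).mp (congrFun (LinearMap.mem_ker.mp hxk) i)
  have hx2 : x ∉ C2 := fun h => hx0 (Subtype.ext (hJx x h fun i hi => by
    have := hxP i
    simpa [P, hi] using this))
  rw [← hU]
  refine rgrw_le_of_coords q Fq hq C1 C2 h12.le x hx hx2 U fun i => ?_
  have := hxP i
  by_cases hi : i ∈ J
  · simp only [P, hi, if_true, Submodule.mem_bot] at this
    rw [this]; exact U.zero_mem
  · simpa only [P, hi, if_false] using this

/-- The first RGRW satisfies (over the rationals)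
`M_{R,1}(C1,C2) ≤ min{ n - dim C1, (m-1)(dim C1 - dim C2), m(n - dim C1)/(n - dim C2) } + 1`. -/
theorem stmt9 (m n : ℕ) [Fintype Fq] [Fintype Fqm]
    (hq : Fintype.card Fq = q) (hm : Module.finrank Fq Fqm = m)
    (C1 C2 : Submodule Fqm (Fin n → Fqm)) (h12 : C2 < C1) :
    (RGRW q C1 C2 1 : ℚ) ≤
      min (min ((n : ℚ) - (Module.finrank Fqm ↥C1 : ℚ))
            (((m : ℚ) - 1) *
              ((Module.finrank Fqm ↥C1 : ℚ) - (Module.finrank Fqm ↥C2 : ℚ))))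
          ((m : ℚ) * ((n : ℚ) - (Module.finrank Fqm ↥C1 : ℚ)) /
            ((n : ℚ) - (Module.finrank Fqm ↥C2 : ℚ))) + 1 := by
  have hlt := Submodule.finrank_lt_finrank_of_lt h12
  have hle : Module.finrank Fqm C1 ≤ n := by
    simpa using Submodule.finrank_le C1
  have b1 := rgrw_bound1 q Fq hq C1 C2 h12
  have b2 := rgrw_bound2 q Fq hq C1 C2 h12
  have b3 := rgrw_bound3 q Fq hq C1 C2 h12
  have hmpos : 0 < Module.finrank Fq Fqm := Module.finrank_pos
  rw [hm] at b2 b3 hmpos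
  generalize RGRW q C1 C2 1 = R at *
  generalize Module.finrank Fqm C1 = k1 at *
  generalize Module.finrank Fqm C2 = k2 at *
  rw [← sub_le_iff_le_add]
  refine le_min (le_min ?_ ?_) ?_
  · have : (R : ℚ) + k1 ≤ n + 1 := by exact_mod_cast b1
    linarith
  · have h1 : (R : ℚ) ≤ m := by exact_mod_cast b2
    have h2 : (1 : ℚ) ≤ m := by exact_mod_cast hmpos
    have h3 : (k2 : ℚ) + 1 ≤ k1 := by exact_mod_cast hlt
    nlinarith
  · have hpos : (0 : ℚ) < (n : ℚ) - k2 := by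
      have : (k2 : ℚ) < n := by exact_mod_cast lt_of_lt_of_le hlt hle
      linarith
    rw [le_div_iff₀ hpos]
    rcases Nat.eq_zero_or_pos R with h0 | h0
    · subst h0
      have h3 : (k1 : ℚ) ≤ n := by exact_mod_cast hle
      have h4 : (0 : ℚ) ≤ m := by positivity
      have := mul_nonneg h4 (sub_nonneg.mpr h3)
      push_cast
      linarith
    · have h := b3 (R - 1)
      have h' : (n - k2) * (R - 1) ≤ m * (n - k1) := by
        by_contra hc
        have := h (by omega)
        omega
      have h'' : (((n - k2) * (R - 1) : ℕ) : ℚ) ≤ ((m * (n - k1) : ℕ) : ℚ) := by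
        exact_mod_cast h'
      rw [Nat.cast_mul, Nat.cast_mul, Nat.cast_sub (by omega), Nat.cast_sub hle,
        Nat.cast_sub (by omega)] at h''
      push_cast at h''
      linarith

end
end

section
/- Assume m ≥ 2 and let C ⊆ F_{q^m}^n be a nonzero linear code. Then: if n ≤ m, d_R(C) ≤ n − dim C + 1; if n > m and dim C = 1, d_R(C) ≤ (m−1)·dim C + 1 = m; and if n > m and dim C ≥ 2, d_R(C) ≤ (m/n)(n − dim C) + 1, where the last inequality is understood over the rationals. -/
open scoped BigOperators

noncomputable section

variable (q : ℕ) (Fq : Type*) {Fqm : Type*} [Field Fq] [Field Fqm] [Algebra Fq Fqm]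

theorem minRankDist_le_of_mem {ι : Type*} (C : Submodule Fqm (ι → Fqm)) (x : ι → Fqm)
    (hx : x ∈ C) (h0 : x ≠ 0) : minRankDist Fq C ≤ rankWeight Fq x :=
  Nat.sInf_le ⟨x, hx, h0, rfl⟩

theorem minRankDist_le_singleton [FiniteDimensional Fq Fqm] {n : ℕ}
    (C : Submodule Fqm (Fin n → Fqm)) (hC : C ≠ ⊥) :
    minRankDist Fq C ≤ n - Module.finrank Fqm ↥C + 1 := by
  classical
  have hk1 : 0 < Module.finrank Fqm C := by
    have := (Submodule.nontrivial_iff_ne_bot).2 hC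
    exact Module.finrank_pos
  have hkn : Module.finrank Fqm C ≤ n := by
    simpa using Submodule.finrank_le C
  set k := Module.finrank Fqm C with hk
  let g : Fin (k - 1) → Fin n := fun j => ⟨j.1, by omega⟩
  let f : C →ₗ[Fqm] (Fin (k - 1) → Fqm) := (LinearMap.funLeft Fqm Fqm g).comp C.subtype
  have hf : LinearMap.ker f ≠ ⊥ := by
    apply LinearMap.ker_ne_bot_of_finrank_lt
    simp only [Module.finrank_fin_fun]
    omega
  obtain ⟨x, hx, hx0⟩ := (Submodule.ne_bot_iff _).1 hf
  refine (minRankDist_le_of_mem Fq C x.1 x.2 (by simpa using hx0)).trans ?_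
  let S : Finset (Fin n) := Finset.univ.filter (fun i => k - 1 ≤ i.1)
  have hS : S.card ≤ n - k + 1 := by
    have : S.card ≤ (Finset.Ico (k - 1) n).card := by
      apply Finset.card_le_card_of_injOn (fun i : Fin n => i.1)
      · intro i hi
        have : k - 1 ≤ i.1 := by simpa [S] using hi
        simp [this]
      · intro a _ b _ h
        exact Fin.ext h
    rw [Nat.card_Ico] at this
    omega
  have hle : Submodule.span Fq (Set.range x.1) ≤
      Submodule.span Fq ((S.image x.1 : Finset Fqm) : Set Fqm) := by
    rw [Submodule.span_le]
    rintro _ ⟨i, rfl⟩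
    by_cases hi : k - 1 ≤ i.1
    · apply Submodule.subset_span
      simp only [Finset.coe_image]
      exact ⟨i, by simpa [S] using hi, rfl⟩
    · have h1 := congrFun (LinearMap.mem_ker.1 hx) ⟨i.1, by omega⟩
      have h2 : x.1 i = 0 := h1
      rw [h2]
      exact Submodule.zero_mem _
  calc rankWeight Fq x.1 ≤ _ := Submodule.finrank_mono hle
    _ ≤ (S.image x.1).card := finrank_span_finset_le_card _
    _ ≤ S.card := Finset.card_image_le
    _ ≤ _ := hS

theorem minRankDist_le_of_lt [FiniteDimensional Fq Fqm] {n : ℕ}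
    (C : Submodule Fqm (Fin n → Fqm)) (e : ℕ) (he : e ≤ Module.finrank Fq Fqm)
    (h : n * (Module.finrank Fq Fqm - e) < Module.finrank Fq Fqm * Module.finrank Fqm C) :
    minRankDist Fq C ≤ e := by
  obtain ⟨W, hW⟩ : ∃ W : Submodule Fq Fqm, Module.finrank Fq W = e := by
    obtain ⟨v, hv⟩ := exists_linearIndependent_of_le_finrank he
    exact ⟨Submodule.span Fq (Set.range v), by simpa using finrank_span_eq_card hv⟩
  let f : C →ₗ[Fq] (Fin n → Fqm ⧸ W) :=
    LinearMap.pi fun i => W.mkQ.comp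
      ((LinearMap.proj i : (Fin n → Fqm) →ₗ[Fq] Fqm).comp (C.subtype.restrictScalars Fq))
  have hf : LinearMap.ker f ≠ ⊥ := by
    have : Module.Finite Fq C := Module.Finite.trans Fqm C
    apply LinearMap.ker_ne_bot_of_finrank_lt
    have hq := Submodule.finrank_quotient_add_finrank W
    rw [← Module.finrank_mul_finrank Fq Fqm C, Module.finrank_pi_fintype]
    simp only [Finset.sum_const, Finset.card_univ, Fintype.card_fin, smul_eq_mul]
    have : Module.finrank Fq (Fqm ⧸ W) = Module.finrank Fq Fqm - e := by omega
    rw [this]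
    exact h
  obtain ⟨x, hx, hx0⟩ := (Submodule.ne_bot_iff _).1 hf
  refine (minRankDist_le_of_mem Fq C x.1 x.2 (by simpa using hx0)).trans ?_
  rw [← hW]
  apply Submodule.finrank_mono
  rw [Submodule.span_le]
  rintro _ ⟨i, rfl⟩
  have h1 := congrFun (LinearMap.mem_ker.1 hx) i
  exact (Submodule.Quotient.mk_eq_zero W).1 h1

/-- Assume `m ≥ 2` and let `C ⊆ F_{q^m}^n` be a nonzero linear code.
If `n ≤ m` then `d_R(C) ≤ n - dim C + 1`; if `n > m` and `dim C = 1` then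
`d_R(C) ≤ (m-1)·dim C + 1 = m`; and if `n > m` and `dim C ≥ 2` then
`d_R(C) ≤ (m/n)(n - dim C) + 1` (over the rationals). -/
theorem stmt10 (m n : ℕ) [Fintype Fq] [Fintype Fqm]
    (hq : Fintype.card Fq = q) (hm : Module.finrank Fq Fqm = m) (hm2 : 2 ≤ m)
    (C : Submodule Fqm (Fin n → Fqm)) (hC : C ≠ ⊥) :
    (n ≤ m → minRankDist Fq C ≤ n - Module.finrank Fqm ↥C + 1) ∧
    (m < n → Module.finrank Fqm ↥C = 1 →
      minRankDist Fq C ≤ (m - 1) * Module.finrank Fqm ↥C + 1 ∧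
      (m - 1) * Module.finrank Fqm ↥C + 1 = m) ∧
    (m < n → 2 ≤ Module.finrank Fqm ↥C →
      (minRankDist Fq C : ℚ) ≤
        (m : ℚ) / (n : ℚ) * ((n : ℚ) - (Module.finrank Fqm ↥C : ℚ)) + 1) := by
  have hfin : FiniteDimensional Fq Fqm := Module.finite_of_finrank_pos (by omega)
  have hkn : Module.finrank Fqm C ≤ n := by
    simpa using Submodule.finrank_le C
  refine ⟨fun _ => minRankDist_le_singleton Fq C hC, fun _ h1 => ?_, fun hmn h2 => ?_⟩
  · rw [h1]
    refine ⟨?_, by omega⟩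
    apply minRankDist_le_of_lt Fq C _ (by omega)
    rw [hm, h1]
    have : m - ((m - 1) * 1 + 1) = 0 := by omega
    rw [this]
    omega
  · generalize hk : Module.finrank Fqm C = k at *
    have hn : 0 < n := by omega
    have hb : m * (n - k) / n < m := by
      rw [Nat.div_lt_iff_lt_mul hn]
      exact Nat.mul_lt_mul_of_pos_left (by omega) (by omega)
    have key : minRankDist Fq C ≤ m * (n - k) / n + 1 := by
      apply minRankDist_le_of_lt Fq C _ (by omega)
      rw [hm, hk]
      have h3 := Nat.lt_mul_div_succ (m * (n - k)) hn
      zify [hkn, Nat.succ_le_of_lt hb] at h3 ⊢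
      nlinarith
    have h4 : ((m * (n - k) / n : ℕ) : ℚ) ≤ ((m * (n - k) : ℕ) : ℚ) / n := Nat.cast_div_le
    have h5 : (minRankDist Fq C : ℚ) ≤ ((m * (n - k) / n : ℕ) : ℚ) + 1 := by
      exact_mod_cast key
    rw [Nat.cast_mul, Nat.cast_sub hkn] at h4
    rw [div_mul_eq_mul_div]
    linarith

end
end

section
/- Let C1 ⊆ F_{q^m}^n be a linear code and C2 ⊊ C1 a subcode with dim C2 = dim C1 − l. Equip Ω = C1 with the uniform probability measure, let X : Ω → F_{q^m}^n be the identity map, and let S : Ω → C1/C2 be the quotient map x ↦ x + C2 (so X is conditionally uniform on each coset given S, and S is uniform on C1/C2). Fix a matrix B ∈ F_{q^m}^{μ×n} and let W = X B^T ∈ F_{q^m}^μ. Then the mutual information (in nats) satisfies I(S ; W) = ( dim(C2^⊥ ∩ row(B)) − dim(C1^⊥ ∩ row(B)) ) · m · log q, where row(B) ⊆ F_{q^m}^n denotes the F_{q^m}-row space of B and dim denotes dimension over F_{q^m}. -/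
open scoped BigOperators

noncomputable section

variable (q : ℕ) (Fq : Type*) {Fqm : Type*} [Field Fq] [Field Fqm] [Algebra Fq Fqm]

/-- Shannon entropy (in nats) of a random variable `f` on a finite probability
space `Ω` equipped with the uniform measure:
`H(f) = - ∑_a P(f = a) log P(f = a) = - ∑_ω (1/|Ω|) log P(f = f ω)`. -/
noncomputable def unifEntropy {Ω : Type*} [Fintype Ω] {α : Type*} (f : Ω → α) : ℝ := by
  classical
  exact - ∑ ω : Ω, (1 / (Fintype.card Ω : ℝ)) *
      Real.log (((Finset.univ.filter fun ω' => f ω' = f ω).card : ℝ) /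
        (Fintype.card Ω : ℝ))

/-- Mutual information (in nats) `I(f;g) = H(f) + H(g) - H(f,g)` of two random
variables on a finite probability space with the uniform measure. -/
noncomputable def unifMutualInfo {Ω : Type*} [Fintype Ω] {α β : Type*}
    (f : Ω → α) (g : Ω → β) : ℝ :=
  unifEntropy f + unifEntropy g - unifEntropy fun ω => (f ω, g ω)

/-- The standard bilinear form. -/
def stdForm (F : Type*) [Field F] (n : ℕ) : LinearMap.BilinForm F (Fin n → F) :=
  LinearMap.mk₂ F (fun x y => ∑ i, x i * y i)
    (by intro a b c; simp [add_mul, Finset.sum_add_distrib])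
    (by intro a b c; simp [Finset.mul_sum, mul_assoc])
    (by intro a b c; simp [mul_add, Finset.sum_add_distrib])
    (by intro a b c; simp [Finset.mul_sum, mul_left_comm])

theorem stdForm_apply {F : Type*} [Field F] {n : ℕ} (x y : Fin n → F) :
    stdForm F n x y = ∑ i, x i * y i := rfl

theorem stdForm_refl (F : Type*) [Field F] (n : ℕ) : (stdForm F n).IsRefl := by
  intro x y h
  rw [stdForm_apply] at *
  rw [← h]
  exact Finset.sum_congr rfl fun i _ => mul_comm _ _

theorem stdForm_nondeg (F : Type*) [Field F] (n : ℕ) : (stdForm F n).Nondegenerate := by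
  constructor
  · intro x h
    exact dotProduct_eq_zero x h
  · intro x h
    refine dotProduct_eq_zero x fun w => ?_
    exact stdForm_refl F n _ _ (h w)

theorem dualCode_eq {F : Type*} [Field F] {n : ℕ} (V : Submodule F (Fin n → F)) :
    dualCode V = (stdForm F n).orthogonal V := by
  ext x
  rw [LinearMap.BilinForm.mem_orthogonal_iff]
  constructor
  · intro h v hv
    exact stdForm_refl F n _ _ (h v hv)
  · intro h v hv
    exact stdForm_refl F n _ _ (h v hv)

theorem finrank_dualCode {F : Type*} [Field F] {n : ℕ} (V : Submodule F (Fin n → F)) :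
    Module.finrank F V + Module.finrank F (dualCode V) = n := by
  have h := LinearMap.BilinForm.finrank_orthogonal (stdForm_nondeg F n) V
  have h2 := Submodule.finrank_le V
  rw [dualCode_eq]
  simp only [Module.finrank_fin_fun] at h h2
  omega

theorem dual_sup {F : Type*} [Field F] {n : ℕ} (C R : Submodule F (Fin n → F)) :
    dualCode (dualCode C ⊔ R) = C ⊓ dualCode R := by
  have hdd : dualCode (dualCode C) = C := by
    rw [dualCode_eq, dualCode_eq]
    exact LinearMap.BilinForm.orthogonal_orthogonal (stdForm_nondeg F n) (stdForm_refl F n) C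
  have hs : dualCode (dualCode C ⊔ R) = dualCode (dualCode C) ⊓ dualCode R := by
    apply le_antisymm
    · refine le_inf ?_ ?_
      · exact fun x hx v hv => hx v (Submodule.mem_sup_left hv)
      · exact fun x hx v hv => hx v (Submodule.mem_sup_right hv)
    · rintro x ⟨h1, h2⟩ v hv
      obtain ⟨a, ha, b, hb, rfl⟩ := Submodule.mem_sup.1 hv
      simp [mul_add, Finset.sum_add_distrib, h1 a ha, h2 b hb]
  rw [hs, hdd]

theorem finrank_key {F : Type*} [Field F] {n : ℕ} (C R : Submodule F (Fin n → F)) :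
    Module.finrank F ↥(C ⊓ dualCode R) + Module.finrank F R =
      Module.finrank F C + Module.finrank F ↥(dualCode C ⊓ R) := by
  have h1 := finrank_dualCode (dualCode C ⊔ R)
  rw [dual_sup] at h1
  have h2 := finrank_dualCode C
  have h3 := Submodule.finrank_sup_add_finrank_inf_eq (dualCode C) R
  omega

theorem unifEntropy_linear {F M α : Type*} [Field F] [Fintype F] [AddCommGroup M] [Module F M]
    [Fintype M] (f : M → α) (K : Submodule F M) (hf : ∀ x y, f x = f y ↔ x - y ∈ K) :
    unifEntropy f = ((Module.finrank F M : ℝ) - Module.finrank F K) *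
      Real.log (Fintype.card F) := by
  classical
  have hfib : ∀ y, (Finset.univ.filter fun x => f x = f y).card =
      Fintype.card F ^ Module.finrank F K := by
    intro y
    rw [← Module.card_eq_pow_finrank (K := F) (V := K), ← Fintype.card_subtype]
    refine Fintype.card_congr ⟨fun x => ⟨x.1 - y, (hf _ _).1 x.2⟩,
      fun k => ⟨k.1 + y, (hf _ _).2 (by simp)⟩, ?_, ?_⟩
    · intro x; simp
    · intro x; simp
  have hc : (0 : ℝ) < Fintype.card F := by exact_mod_cast Fintype.card_pos
  have hM : (Fintype.card M : ℝ) ≠ 0 := by exact_mod_cast Fintype.card_ne_zero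
  have hM2 : (Fintype.card M : ℝ) = (Fintype.card F : ℝ) ^ Module.finrank F M := by
    rw [Module.card_eq_pow_finrank (K := F) (V := M)]; push_cast; rfl
  have h0 : unifEntropy f = - ∑ ω : M, (1 / (Fintype.card M : ℝ)) *
      Real.log (((Finset.univ.filter fun ω' => f ω' = f ω).card : ℝ) /
        (Fintype.card M : ℝ)) := by
    unfold unifEntropy
    congr!
  rw [h0]
  simp only [hfib]
  rw [Finset.sum_const, Finset.card_univ, nsmul_eq_mul, ← mul_assoc, mul_one_div_cancel hM, one_mul,
    hM2, Real.log_div (by positivity) (by positivity)]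
  push_cast
  rw [Real.log_pow, Real.log_pow]
  ring

theorem mem_dual_span {F : Type*} [Field F] {n μ : ℕ} (B : Fin μ → Fin n → F) (x : Fin n → F) :
    x ∈ dualCode (Submodule.span F (Set.range B)) ↔ ∀ j, ∑ i, x i * B j i = 0 := by
  constructor
  · intro h j
    exact h _ (Submodule.subset_span ⟨j, rfl⟩)
  · intro h v hv
    have : Submodule.span F (Set.range B) ≤ LinearMap.ker (stdForm F n x) := by
      rw [Submodule.span_le]
      rintro _ ⟨j, rfl⟩
      exact h j
    exact this hv

/-- With `Ω = C1` uniform, `X` the identity, `S : C1 → C1/C2` the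
quotient map, and `B ∈ F_{q^m}^{μ×n}`, setting `W = X Bᵀ`, the mutual information
satisfies `I(S;W) = (dim(C2^⊥ ∩ row(B)) - dim(C1^⊥ ∩ row(B))) · m · log q` in nats. -/
theorem stmt13 (m n l μ : ℕ) [Fintype Fq] [Fintype Fqm]
    (hq : Fintype.card Fq = q) (hm : Module.finrank Fq Fqm = m)
    (C1 C2 : Submodule Fqm (Fin n → Fqm)) [Fintype ↥C1] (h12 : C2 < C1)
    (hl : Module.finrank Fqm ↥C1 = Module.finrank Fqm ↥C2 + l)
    (B : Fin μ → Fin n → Fqm) :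
    unifMutualInfo
        (fun x : ↥C1 => (Submodule.Quotient.mk x : ↥C1 ⧸ C2.comap C1.subtype))
        (fun x : ↥C1 => fun j : Fin μ => ∑ i, (x : Fin n → Fqm) i * B j i) =
      ((Module.finrank Fqm ↥(dualCode C2 ⊓ Submodule.span Fqm (Set.range B)) : ℝ) -
          (Module.finrank Fqm ↥(dualCode C1 ⊓ Submodule.span Fqm (Set.range B)) : ℝ)) *
        ((m : ℝ) * Real.log (q : ℝ)) := by
  set R := Submodule.span Fqm (Set.range B) with hR
  have hB : ∀ x y : ↥C1, ((fun j : Fin μ => ∑ i, (x : Fin n → Fqm) i * B j i) =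
      (fun j : Fin μ => ∑ i, (y : Fin n → Fqm) i * B j i)) ↔
      x - y ∈ (dualCode R).comap C1.subtype := by
    intro x y
    rw [Submodule.mem_comap, hR, mem_dual_span, funext_iff]
    refine forall_congr' fun j => ?_
    simp [sub_mul, Finset.sum_sub_distrib, sub_eq_zero]
  have hS : ∀ x y : ↥C1, ((Submodule.Quotient.mk x : ↥C1 ⧸ C2.comap C1.subtype) =
      Submodule.Quotient.mk y) ↔ x - y ∈ C2.comap C1.subtype :=
    fun x y => Submodule.Quotient.eq _
  have hSB : ∀ x y : ↥C1, (((Submodule.Quotient.mk x : ↥C1 ⧸ C2.comap C1.subtype),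
      (fun j : Fin μ => ∑ i, (x : Fin n → Fqm) i * B j i)) =
      ((Submodule.Quotient.mk y : ↥C1 ⧸ C2.comap C1.subtype),
      (fun j : Fin μ => ∑ i, (y : Fin n → Fqm) i * B j i))) ↔
      x - y ∈ (C2 ⊓ dualCode R).comap C1.subtype := by
    intro x y
    rw [Prod.mk.injEq, hS, hB]
    rfl
  have hcm : ∀ V : Submodule Fqm (Fin n → Fqm),
      Module.finrank Fqm ↥(V.comap C1.subtype) = Module.finrank Fqm ↥(C1 ⊓ V) := by
    intro V
    rw [← Submodule.map_comap_subtype, Submodule.finrank_map_subtype_eq]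
  have e1 : C1 ⊓ C2 = C2 := inf_eq_right.2 h12.le
  have e2 : C1 ⊓ (C2 ⊓ dualCode R) = C2 ⊓ dualCode R := by rw [← inf_assoc, e1]
  have hlog : Real.log (Fintype.card Fqm) = (m : ℝ) * Real.log (q : ℝ) := by
    rw [Module.card_eq_pow_finrank (K := Fq) (V := Fqm), hq, hm]
    push_cast
    rw [Real.log_pow]
  unfold unifMutualInfo
  rw [unifEntropy_linear _ _ hS, unifEntropy_linear _ _ hB, unifEntropy_linear _ _ hSB, hlog,
    hcm, hcm, hcm, e1, e2]
  have k1 := finrank_key C1 R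
  have k2 := finrank_key C2 R
  have k1' : (_ : ℝ) = _ := congrArg (Nat.cast (R := ℝ)) k1
  have k2' : (_ : ℝ) = _ := congrArg (Nat.cast (R := ℝ)) k2
  push_cast at k1' k2'
  rw [← add_mul, ← sub_mul]
  congr 1
  linarith

end
end

section
/- Fix x ∈ F_{q^m}^n, an integer ρ with 0 ≤ ρ ≤ n, and an integer N ≥ n − ρ. Then there exists a matrix A ∈ F_q^{N×n} with rank A = n − ρ over F_q such that the rank weight of x A^T equals max(0, d_R(x,0) − ρ), i.e., the dimension over F_q of the F_q-span of the coordinates of x A^T is max(0, d_R(x,0) − ρ). -/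
open scoped BigOperators

noncomputable section

variable (q : ℕ) (Fq : Type*) {Fqm : Type*} [Field Fq] [Field Fqm] [Algebra Fq Fqm]

/-- `X Aᵀ ∈ F_{q^m}^N`: the image of a row vector `X ∈ F_{q^m}^n` under the
`F_{q^m}`-linear map obtained by extending `A ∈ F_q^{N×n}` scalarwise from `F_q`
to `F_{q^m}`. -/
noncomputable def appMat {N n : ℕ} (A : Fin N → Fin n → Fq) (X : Fin n → Fqm) :
    Fin N → Fqm :=
  fun j => ∑ i, X i * algebraMap Fq Fqm (A j i)

/-- The rank over `F_q` of a matrix `A ∈ F_q^{N×n}` (the dimension of its row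
space). -/
noncomputable def matRank {N n : ℕ} (A : Fin N → Fin n → Fq) : ℕ :=
  Module.finrank Fq ↥(Submodule.span Fq (Set.range A))

theorem aux_exists_sub {K V : Type*} [Field K] [AddCommGroup V] [Module K V]
    (S : Submodule K V) (k : ℕ) (hk : k ≤ Module.finrank K S) :
    ∃ W : Submodule K V, W ≤ S ∧ Module.finrank K W = k := by
  obtain ⟨v, hv⟩ := exists_linearIndependent_of_le_finrank hk
  refine ⟨(Submodule.span K (Set.range v)).map S.subtype, Submodule.map_subtype_le _ _, ?_⟩
  rw [Submodule.finrank_map_subtype_eq, finrank_span_eq_card hv, Fintype.card_fin]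

theorem aux_exists_R {K V U : Type*} [Field K] [AddCommGroup V] [Module K V]
    [AddCommGroup U] [Module K U] [FiniteDimensional K V] (f : V →ₗ[K] U) (ρ : ℕ) :
    ∃ R : Submodule K V, Module.finrank K R = Module.finrank K V - ρ ∧
      Module.finrank K (R.map f) = Module.finrank K (LinearMap.range f) - ρ := by
  have hrn := f.finrank_range_add_finrank_ker
  rcases le_total ρ (Module.finrank K (LinearMap.range f)) with h | h
  · obtain ⟨W, hW, hWd⟩ := aux_exists_sub (LinearMap.range f)
      (Module.finrank K (LinearMap.range f) - ρ) (Nat.sub_le _ _)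
    have hmap : (W.comap f).map f = W := Submodule.map_comap_eq_of_le hW
    refine ⟨W.comap f, ?_, by rw [hmap, hWd]⟩
    have h2 := (f.domRestrict (W.comap f)).finrank_range_add_finrank_ker
    have hk : LinearMap.ker f ≤ W.comap f := LinearMap.ker_le_comap f
    have h3 : Module.finrank K (LinearMap.ker (f.domRestrict (W.comap f)))
        = Module.finrank K (LinearMap.ker f) := by
      rw [LinearMap.ker_domRestrict]
      exact (Submodule.comapSubtypeEquivOfLe hk).finrank_eq
    rw [LinearMap.range_domRestrict, hmap, h3, hWd] at h2
    omega
  · obtain ⟨W, hW, hWd⟩ := aux_exists_sub (LinearMap.ker f)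
      (Module.finrank K V - ρ) (by omega)
    refine ⟨W, hWd, ?_⟩
    rw [LinearMap.le_ker_iff_map.1 hW, finrank_bot]
    omega

theorem aux_exists_gen {K V : Type*} [Field K] [AddCommGroup V] [Module K V]
    [FiniteDimensional K V] (R : Submodule K V) (N : ℕ) (h : Module.finrank K R ≤ N) :
    ∃ A : Fin N → V, Submodule.span K (Set.range A) = R := by
  let b := Module.finBasis K R
  refine ⟨fun j => if hj : (j : ℕ) < Module.finrank K R then (b ⟨j, hj⟩ : V) else 0, ?_⟩
  apply le_antisymm
  · rw [Submodule.span_le]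
    rintro _ ⟨j, rfl⟩
    dsimp only
    split_ifs
    · exact Subtype.property _
    · exact R.zero_mem
  · have hb : (Submodule.span K (Set.range b)).map R.subtype = R := by
      rw [b.span_eq, Submodule.map_subtype_top]
    conv_lhs => rw [← hb]
    rw [Submodule.map_span, Submodule.span_le]
    rintro _ ⟨_, ⟨i, rfl⟩, rfl⟩
    apply Submodule.subset_span
    exact ⟨⟨i, i.2.trans_le h⟩, by simp⟩

/-- For every `x ∈ F_{q^m}^n`, `0 ≤ ρ ≤ n` and `N ≥ n - ρ`, there is
a matrix `A ∈ F_q^{N×n}` of rank `n - ρ` over `F_q` such that the rank weight of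
`x Aᵀ` equals `max(0, d_R(x,0) - ρ)` (natural subtraction). -/
theorem stmt16 (m n N ρ : ℕ) [Fintype Fq] [Fintype Fqm]
    (hq : Fintype.card Fq = q) (hm : Module.finrank Fq Fqm = m)
    (x : Fin n → Fqm) (hρ : ρ ≤ n) (hN : n - ρ ≤ N) :
    ∃ A : Fin N → Fin n → Fq,
      matRank Fq A = n - ρ ∧
      rankWeight Fq (appMat Fq A x) = rankWeight Fq x - ρ := by
  let f : (Fin n → Fq) →ₗ[Fq] Fqm := Fintype.linearCombination Fq x
  have hf : ∀ a, f a = ∑ i, x i * algebraMap Fq Fqm (a i) := by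
    intro a
    simp [f, Fintype.linearCombination_apply, Algebra.smul_def, mul_comm]
  have hr : LinearMap.range f = Submodule.span Fq (Set.range x) :=
    Fintype.range_linearCombination Fq x
  obtain ⟨R, hR1, hR2⟩ := aux_exists_R f ρ
  rw [Module.finrank_fin_fun] at hR1
  obtain ⟨A, hA⟩ := aux_exists_gen R N (by omega)
  refine ⟨A, by rw [matRank, hA, hR1], ?_⟩
  have happ : appMat Fq A x = f ∘ A := by
    funext j
    simp [appMat, hf]
  rw [rankWeight, rankWeight, happ, Set.range_comp, ← Submodule.map_span, hA, hR2, hr]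

end
end
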